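/- Let C be a 2-reduced cocommutative dg coalgebra over ℚ. Every t-equivalence of left dg C-comodules is a quasi-isomorphism. Conversely, every quasi-isomorphism between bounded below C-comodules is a t-equivalence. -/

import Mathlib

open scoped TensorProduct

noncomputable section

/-- A homologically graded differential graded `ℚ`-vector space (chain complex of
`ℚ`-vector spaces presented as a graded module with a degree `-1` square-zero differential). -/
structure DGVect : Type 1 where
  carrier : Type
  [isAddCommGroup : AddCommGroup carrier]
  [isModule : Module ℚ carrier]
  grading : ℤ → Submodule ℚ carrier
  [isDecomp : DirectSum.Decomposition grading]
  d : carrier →ₗ[ℚ] carrier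
  d_mem : ∀ (n : ℤ), ∀ x ∈ grading n, d x ∈ grading (n - 1)
  d_sq : d.comp d = 0

attribute [instance] DGVect.isAddCommGroup DGVect.isModule DGVect.isDecomp

/-- The operator acting on the degree `n` graded component by `(-1)^(k*n)`. -/
def signOpOf {V : Type} [AddCommGroup V] [Module ℚ V] (g : ℤ → Submodule ℚ V)
    [DirectSum.Decomposition g] (k : ℤ) : V →ₗ[ℚ] V :=
  (DirectSum.toModule ℚ ℤ V fun n => ((-1 : ℚ) ^ (k * n)) • (g n).subtype).comp
    (DirectSum.decomposeLinearEquiv g).toLinearMap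

/-- The Koszul parity operator, acting by `(-1)^n` in degree `n`. -/
def parityOf {V : Type} [AddCommGroup V] [Module ℚ V] (g : ℤ → Submodule ℚ V)
    [DirectSum.Decomposition g] : V →ₗ[ℚ] V := signOpOf g 1

def DGVect.parity (V : DGVect) : V.carrier →ₗ[ℚ] V.carrier := parityOf V.grading

/-- A graded object is bounded below if it vanishes in all sufficiently negative degrees. -/
def DGVect.BoundedBelow (V : DGVect) : Prop := ∃ b : ℤ, ∀ n : ℤ, n < b → V.grading n = ⊥

/-- The Koszul signed braiding `v ⊗ w ↦ (-1)^{|v||w|} w ⊗ v` of graded vector spaces. -/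
def kSwapOf {V W : Type} [AddCommGroup V] [Module ℚ V] [AddCommGroup W] [Module ℚ W]
    (gV : ℤ → Submodule ℚ V) (gW : ℤ → Submodule ℚ W)
    [DirectSum.Decomposition gV] [DirectSum.Decomposition gW] :
    V ⊗[ℚ] W →ₗ[ℚ] W ⊗[ℚ] V :=
  TensorProduct.lift
    ((DirectSum.toModule ℚ ℤ (W →ₗ[ℚ] W ⊗[ℚ] V) (fun i =>
        (((DirectSum.toModule ℚ ℤ (V →ₗ[ℚ] W ⊗[ℚ] V) (fun j =>
              ((-1 : ℚ) ^ (i * j)) • ((TensorProduct.mk ℚ W V).comp (gW j).subtype))).comp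
            (DirectSum.decomposeLinearEquiv gW).toLinearMap).flip).comp
          (gV i).subtype)).comp
      (DirectSum.decomposeLinearEquiv gV).toLinearMap)

/-- The degree `n` part of the tensor product grading:
the span of the homogeneous tensors of total degree `n`. -/
def tensorGrading {V W : Type} [AddCommGroup V] [Module ℚ V] [AddCommGroup W] [Module ℚ W]
    (gV : ℤ → Submodule ℚ V) (gW : ℤ → Submodule ℚ W) (n : ℤ) : Submodule ℚ (V ⊗[ℚ] W) :=
  ⨆ p : {p : ℤ × ℤ // p.1 + p.2 = n},
    LinearMap.range (TensorProduct.map (gV p.1.1).subtype (gW p.1.2).subtype)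

/-- `f` is a quasi-isomorphism from the complex `(V, dV)` to the complex `(W, dW)`:
it induces a bijection on homology (`ker d / im d`). -/
def IsQuasiIso {V W : Type} [AddCommGroup V] [Module ℚ V] [AddCommGroup W] [Module ℚ W]
    (dV : V →ₗ[ℚ] V) (dW : W →ₗ[ℚ] W) (f : V →ₗ[ℚ] W) : Prop :=
  (∀ x : V, dV x = 0 → (∃ y, f x = dW y) → ∃ z, x = dV z) ∧
  (∀ w : W, dW w = 0 → ∃ x, dV x = 0 ∧ ∃ y, w - f x = dW y)

/-- A differential graded algebra over `ℚ`. -/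
structure DGAlgebra extends DGVect where
  mul : carrier →ₗ[ℚ] carrier →ₗ[ℚ] carrier
  one : carrier
  one_mem : one ∈ grading 0
  mul_mem : ∀ (i j : ℤ) (x y : carrier), x ∈ grading i → y ∈ grading j →
    mul x y ∈ grading (i + j)
  mul_assoc' : ∀ x y z : carrier, mul (mul x y) z = mul x (mul y z)
  one_mul' : ∀ x : carrier, mul one x = x
  mul_one' : ∀ x : carrier, mul x one = x
  leibniz : ∀ (i : ℤ) (x y : carrier), x ∈ grading i →
    d (mul x y) = mul (d x) y + ((-1 : ℚ) ^ i) • mul x (d y)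

/-- The multiplication of a dg algebra as a map out of the tensor product. -/
def DGAlgebra.mulMap (A : DGAlgebra) : A.carrier ⊗[ℚ] A.carrier →ₗ[ℚ] A.carrier :=
  TensorProduct.lift A.mul

/-- A dg algebra is connective if it is concentrated in non-negative degrees. -/
def DGAlgebra.Connective (A : DGAlgebra) : Prop := ∀ n : ℤ, n < 0 → A.grading n = ⊥

/-- A (coassociative counital) differential graded coalgebra over `ℚ`,
non-negatively graded. -/
structure DGCoalgebra extends DGVect where
  comul : carrier →ₗ[ℚ] carrier ⊗[ℚ] carrier
  counit : carrier →ₗ[ℚ] ℚ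
  nonneg : ∀ n : ℤ, n < 0 → grading n = ⊥
  comul_mem : ∀ (n : ℤ), ∀ x ∈ grading n, comul x ∈ tensorGrading grading grading n
  counit_zero : ∀ (n : ℤ), n ≠ 0 → ∀ x ∈ grading n, counit x = 0
  coassoc : (TensorProduct.assoc ℚ carrier carrier carrier).toLinearMap.comp
      ((TensorProduct.map comul LinearMap.id).comp comul)
      = (TensorProduct.map LinearMap.id comul).comp comul
  counit_comul_left : (TensorProduct.lid ℚ carrier).toLinearMap.comp
      ((TensorProduct.map counit LinearMap.id).comp comul) = LinearMap.id
  counit_comul_right : (TensorProduct.rid ℚ carrier).toLinearMap.comp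
      ((TensorProduct.map LinearMap.id counit).comp comul) = LinearMap.id
  comul_chain : comul.comp d
      = (TensorProduct.map d LinearMap.id + TensorProduct.map (parityOf grading) d).comp comul
  counit_chain : counit.comp d = 0

/-- Cocommutativity: the comultiplication is invariant under the Koszul signed twist. -/
def DGCoalgebra.Cocomm (C : DGCoalgebra) : Prop :=
  (kSwapOf C.grading C.grading).comp C.comul = C.comul

/-- A coaugmented dg coalgebra: a dg coalgebra with a coaugmentation `η : ℚ → C`,
recorded by the grouplike element `one = η 1` in degree `0`. -/
structure CoaugDGCoalgebra extends DGCoalgebra where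
  one : carrier
  one_mem : one ∈ grading 0
  counit_one : counit one = 1
  comul_one : comul one = one ⊗ₜ[ℚ] one

/-- A coaugmented dg coalgebra is 2-reduced if `C₀ = ℚ` (spanned by the coaugmentation)
and `C₁ = 0`. -/
def CoaugDGCoalgebra.TwoReduced (C : CoaugDGCoalgebra) : Prop :=
  C.grading 0 = Submodule.span ℚ {C.one} ∧ C.grading 1 = ⊥

/-- A twisting chain `τ : C ⇝ A`: a degree `-1` linear map satisfying
`d(τc) = -τ(dc) - (-1)^{|c₍₀₎|} τ(c₍₀₎)·τ(c₍₁₎)`. -/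
structure TwistingChain (C : DGCoalgebra) (A : DGAlgebra) where
  toFun : C.carrier →ₗ[ℚ] A.carrier
  mem : ∀ (n : ℤ), ∀ x ∈ C.grading n, toFun x ∈ A.grading (n - 1)
  twist : A.d.comp toFun + toFun.comp C.d
      + A.mulMap.comp ((TensorProduct.map (toFun.comp (parityOf C.grading)) toFun).comp C.comul)
      = 0

/-- A left dg module over a dg algebra. -/
structure DGModule (A : DGAlgebra) extends DGVect where
  smul : A.carrier →ₗ[ℚ] carrier →ₗ[ℚ] carrier
  smul_mem : ∀ (i j : ℤ) (a : A.carrier) (x : carrier), a ∈ A.grading i → x ∈ grading j →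
    smul a x ∈ grading (i + j)
  one_smul' : ∀ x : carrier, smul A.one x = x
  mul_smul' : ∀ (a b : A.carrier) (x : carrier), smul (A.mul a b) x = smul a (smul b x)
  leibniz : ∀ (i : ℤ) (a : A.carrier) (x : carrier), a ∈ A.grading i →
    d (smul a x) = smul (A.d a) x + ((-1 : ℚ) ^ i) • smul a (d x)

/-- The action of a dg module as a map out of the tensor product. -/
def DGModule.actionMap {A : DGAlgebra} (M : DGModule A) :
    A.carrier ⊗[ℚ] M.carrier →ₗ[ℚ] M.carrier := TensorProduct.lift M.smul

/-- A left dg comodule over a dg coalgebra. -/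
structure DGComodule (C : DGCoalgebra) extends DGVect where
  coact : carrier →ₗ[ℚ] C.carrier ⊗[ℚ] carrier
  coact_mem : ∀ (n : ℤ), ∀ x ∈ grading n, coact x ∈ tensorGrading C.grading grading n
  coassoc : (TensorProduct.assoc ℚ C.carrier C.carrier carrier).toLinearMap.comp
      ((TensorProduct.map C.comul LinearMap.id).comp coact)
      = (TensorProduct.map LinearMap.id coact).comp coact
  counit_coact : (TensorProduct.lid ℚ carrier).toLinearMap.comp
      ((TensorProduct.map C.counit LinearMap.id).comp coact) = LinearMap.id
  coact_chain : coact.comp d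
      = (TensorProduct.map C.d LinearMap.id + TensorProduct.map (parityOf C.grading) d).comp coact

/-- Morphisms of dg modules: degree `0` graded chain maps commuting with the action. -/
def IsModuleHom (A : DGAlgebra) (M M' : DGModule A)
    (g : M.carrier →ₗ[ℚ] M'.carrier) : Prop :=
  (∀ (n : ℤ), ∀ x ∈ M.grading n, g x ∈ M'.grading n) ∧
  g.comp M.d = M'.d.comp g ∧
  g.comp M.actionMap = M'.actionMap.comp (TensorProduct.map LinearMap.id g)

/-- Morphisms of dg comodules: degree `0` graded chain maps commuting with the coaction. -/
def IsComoduleHom (C : DGCoalgebra) (N N' : DGComodule C)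
    (f : N.carrier →ₗ[ℚ] N'.carrier) : Prop :=
  (∀ (n : ℤ), ∀ x ∈ N.grading n, f x ∈ N'.grading n) ∧
  f.comp N.d = N'.d.comp f ∧
  (TensorProduct.map LinearMap.id f).comp N.coact = N'.coact.comp f

/-- The `A`-action on a twisted extension `A ⊗_τ N`: multiplication on the first factor. -/
def extAction (A : DGAlgebra) (N : Type) [AddCommGroup N] [Module ℚ N] :
    A.carrier ⊗[ℚ] (A.carrier ⊗[ℚ] N) →ₗ[ℚ] A.carrier ⊗[ℚ] N :=
  (TensorProduct.map A.mulMap LinearMap.id).comp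
    (TensorProduct.assoc ℚ A.carrier A.carrier N).symm.toLinearMap

/-- The differential of the twisted extension `A ⊗_τ N`:
`d(a ⊗ n) = da ⊗ n + (-1)^{|a|} a ⊗ dn - (-1)^{|a|} a·τ(n₍₀₎) ⊗ n₍₁₎`
for a `C`-comodule `(N, dN, ρ)`. -/
def extDiff (C : DGCoalgebra) (A : DGAlgebra) (τ : TwistingChain C A)
    (N : Type) [AddCommGroup N] [Module ℚ N]
    (dN : N →ₗ[ℚ] N) (ρ : N →ₗ[ℚ] C.carrier ⊗[ℚ] N) :
    A.carrier ⊗[ℚ] N →ₗ[ℚ] A.carrier ⊗[ℚ] N :=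
  TensorProduct.map A.d LinearMap.id + TensorProduct.map (parityOf A.grading) dN
    - (TensorProduct.map
        (A.mulMap.comp (TensorProduct.map (parityOf A.grading) τ.toFun)) LinearMap.id).comp
        ((TensorProduct.assoc ℚ A.carrier C.carrier N).symm.toLinearMap.comp
          (TensorProduct.map LinearMap.id ρ))

/-- The `C`-coaction on a twisted coextension `C ⊗^τ M`, namely `Δ ⊗ id`. -/
def coextCoact (C : DGCoalgebra) (M : Type) [AddCommGroup M] [Module ℚ M] :
    C.carrier ⊗[ℚ] M →ₗ[ℚ] C.carrier ⊗[ℚ] (C.carrier ⊗[ℚ] M) :=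
  (TensorProduct.assoc ℚ C.carrier C.carrier M).toLinearMap.comp
    (TensorProduct.map C.comul LinearMap.id)

/-- The differential of the twisted coextension `C ⊗^τ M`, expressed in terms of the map
`tact : C ⊗ M → M`, `c ⊗ m ↦ τ(c)·m`:
`d(c ⊗ m) = dc ⊗ m + (-1)^{|c|} c ⊗ dm + (-1)^{|c₍₀₎|} c₍₀₎ ⊗ τ(c₍₁₎)·m`. -/
def coextDiffFrom (C : DGCoalgebra) (M : Type) [AddCommGroup M] [Module ℚ M]
    (dM : M →ₗ[ℚ] M) (tact : C.carrier ⊗[ℚ] M →ₗ[ℚ] M) :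
    C.carrier ⊗[ℚ] M →ₗ[ℚ] C.carrier ⊗[ℚ] M :=
  TensorProduct.map C.d LinearMap.id + TensorProduct.map (parityOf C.grading) dM
    + (TensorProduct.map (parityOf C.grading) tact).comp (coextCoact C M)

/-- The differential of the twisted coextension `C ⊗^τ M` of an `A`-module `(M, dM, act)`. -/
def coextDiff (C : DGCoalgebra) (A : DGAlgebra) (τ : TwistingChain C A)
    (M : Type) [AddCommGroup M] [Module ℚ M]
    (dM : M →ₗ[ℚ] M) (act : A.carrier ⊗[ℚ] M →ₗ[ℚ] M) :
    C.carrier ⊗[ℚ] M →ₗ[ℚ] C.carrier ⊗[ℚ] M :=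
  coextDiffFrom C M dM (act.comp (TensorProduct.map τ.toFun LinearMap.id))

/-- Morphisms of dg algebras. -/
structure DGAlgebraHom (A B : DGAlgebra) where
  toLinearMap : A.carrier →ₗ[ℚ] B.carrier
  mem : ∀ (n : ℤ), ∀ x ∈ A.grading n, toLinearMap x ∈ B.grading n
  chain : toLinearMap.comp A.d = B.d.comp toLinearMap
  map_one : toLinearMap A.one = B.one
  map_mul : ∀ x y : A.carrier, toLinearMap (A.mul x y) = B.mul (toLinearMap x) (toLinearMap y)

/-- Data exhibiting a dg algebra as the cobar construction `ΩC` of a coaugmented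
dg coalgebra `C`, via the universal twisting chain `t : C ⇝ ΩC`:
dg algebra maps `ΩC → A` correspond bijectively to twisting chains `C ⇝ A`
vanishing on the coaugmentation. -/
structure CobarData (C : CoaugDGCoalgebra) where
  alg : DGAlgebra
  t : TwistingChain C.toDGCoalgebra alg
  t_one : t.toFun C.one = 0
  univ : ∀ (A : DGAlgebra) (τ : TwistingChain C.toDGCoalgebra A), τ.toFun C.one = 0 →
    ∃! F : DGAlgebraHom alg A, F.toLinearMap.comp t.toFun = τ.toFun

/-- A morphism of `C`-comodules is a `t`-equivalence if the induced morphism of twisted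
extensions `ΩC ⊗_t N → ΩC ⊗_t M` is a quasi-isomorphism. -/
def IsTEquiv (C : CoaugDGCoalgebra) (Ω : CobarData C) (N M : DGComodule C.toDGCoalgebra)
    (f : N.carrier →ₗ[ℚ] M.carrier) : Prop :=
  IsQuasiIso (extDiff C.toDGCoalgebra Ω.alg Ω.t N.carrier N.d N.coact)
    (extDiff C.toDGCoalgebra Ω.alg Ω.t M.carrier M.d M.coact)
    (TensorProduct.map LinearMap.id f)

/-!
A morphism is a quasi-isomorphism precisely when its mapping cone is acyclic, and twisted extension
along a twisting chain `τ : C ⇝ A` commutes with mapping cones, so both implications are about the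
acyclicity of a single comodule `K`.

If `K` is acyclic, a graded contraction `h` of `K` yields the contraction `a ⊗ k ↦ ± a ⊗ h k` of the
untwisted tensor product `A ⊗ K`. If `τ` vanishes on `C₀` and `C₁`, the twisting term lowers the
degree in `K` by at least two, hence `1 - (D H + H D)` strictly lowers that degree. When `K` is
bounded below it is therefore locally nilpotent, and `A ⊗_τ K` is acyclic.

If `A ⊗_τ K` is acyclic, the same perturbation argument, now filtering by the degree in `C`, shows
that `C ⊗^τ (A ⊗_τ K)` is acyclic. The complex `K` is a retract of it through `k ↦ k₍₀₎ ⊗ 1 ⊗ k₍₁₎`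
and the counit of `C` followed by an augmentation of `A` that kills `τ`; for `A = ΩC` this
augmentation is the algebra map classifying the zero twisting chain.
-/

section LocallyNilpotent

variable {R V : Type*} [Ring R] [AddCommGroup V] [Module R V]

theorem exists_pow_apply_eq_zero_of_lowers (φ : Module.End R V) (S : ℤ → Submodule R V)
    (hS : ⨆ i, S i = ⊤) {b : ℤ} (hb : ∀ i < b, S i = ⊥)
    (hφ : ∀ i, S i ≤ (⨆ j < i, S j).comap φ) (x : V) : ∃ n : ℕ, (φ ^ n) x = 0 := by
  let E : Submodule R V := ⨆ n, LinearMap.iterateKer φ n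
  have mem_E {y : V} : y ∈ E ↔ ∃ n : ℕ, (φ ^ n) y = 0 :=
    Submodule.mem_iSup_of_chain (LinearMap.iterateKer φ) y
  have mem_E_of_apply {y : V} (hy : φ y ∈ E) : y ∈ E := by
    obtain ⟨n, hn⟩ := mem_E.1 hy
    exact mem_E.2 ⟨n + 1, by rwa [pow_succ, Module.End.mul_apply]⟩
  have le_E (k : ℕ) : ∀ i < b + k, S i ≤ E := by
    induction k with
    | zero => intro i hi; simp [hb i (by simpa using hi)]
    | succ k ih =>
      intro i hi y hy
      refine mem_E_of_apply ((iSup₂_le fun j hj => ih j ?_ : ⨆ j < i, S j ≤ E) (hφ i hy))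
      push_cast at hi
      omega
  have top_le : ⊤ ≤ E := hS ▸ iSup_le fun i => le_E (i - b + 1).toNat i (by omega)
  exact mem_E.1 (top_le Submodule.mem_top)

theorem exact_of_locally_nilpotent_homotopy {D H : Module.End R V} (hD : D * D = 0)
    (hφ : ∀ x, ∃ n : ℕ, ((1 - (D * H + H * D)) ^ n) x = 0) : Function.Exact D D := by
  set φ := 1 - (D * H + H * D)
  have apply_cycle {x : V} (hx : D x = 0) : φ x = x - D (H x) := by simp [φ, hx]
  have D_sq (x : V) : D (D x) = 0 := LinearMap.congr_fun hD x
  have cycle_mem_range (n : ℕ) : ∀ x, D x = 0 → (φ ^ n) x = 0 → x ∈ Set.range D := by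
    induction n with
    | zero => intro x _ hx; exact ⟨0, by simpa using hx.symm⟩
    | succ n ih =>
      intro x hx hn
      obtain ⟨y, hy⟩ := ih (φ x) (by simp [apply_cycle hx, hx, D_sq])
        (by rwa [pow_succ, Module.End.mul_apply] at hn)
      exact ⟨y + H x, by rw [map_add, hy, apply_cycle hx, sub_add_cancel]⟩
  refine fun x => ⟨fun hx => ?_, fun ⟨y, hy⟩ => hy ▸ D_sq y⟩
  obtain ⟨n, hn⟩ := hφ x
  exact cycle_mem_range n x hx hn

theorem exact_add_of_lowers {D₀ Θ H : V →ₗ[R] V} (hD : (D₀ + Θ) ∘ₗ (D₀ + Θ) = 0)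
    (hH : D₀ ∘ₗ H + H ∘ₗ D₀ = LinearMap.id) (S : ℤ → Submodule R V) (hS : ⨆ i, S i = ⊤)
    {b : ℤ} (hb : ∀ i < b, S i = ⊥) (k : ℤ) (hSH : ∀ i, S i ≤ (S (i + k)).comap H)
    (hSΘ : ∀ i, S i ≤ (⨆ j < i - k, S j).comap Θ) : Function.Exact (D₀ + Θ) (D₀ + Θ) := by
  refine exact_of_locally_nilpotent_homotopy (H := H) hD
    (exists_pow_apply_eq_zero_of_lowers _ S hS hb fun i x hx => ?_)
  have hφ : (1 - ((D₀ + Θ) * H + H * (D₀ + Θ)) : Module.End R V) x = -(Θ (H x) + H (Θ x)) := by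
    have := LinearMap.congr_fun hH x
    simp only [LinearMap.add_apply, LinearMap.comp_apply, LinearMap.id_apply] at this
    simp only [LinearMap.sub_apply, Module.End.one_apply, LinearMap.add_apply,
      Module.End.mul_apply, map_add]
    nth_rewrite 1 [← this]
    abel
  have hΘH : Θ (H x) ∈ ⨆ j < i, S j := by simpa using hSΘ _ (hSH i hx)
  have hHΘ : ⨆ j < i - k, S j ≤ (⨆ j < i, S j).comap H :=
    iSup₂_le fun j hj => (hSH j).trans
      (Submodule.comap_mono (le_iSup₂_of_le (j + k) (by omega) le_rfl))
  rw [Submodule.mem_comap, hφ]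
  exact neg_mem (add_mem hΘH (hHΘ (hSΘ i hx)))

end LocallyNilpotent

section Contraction

theorem exists_contraction {F V : Type*} [DivisionRing F] [AddCommGroup V] [Module F V]
    {d : V →ₗ[F] V} (hd : Function.Exact d d) :
    ∃ h : V →ₗ[F] V, d ∘ₗ h + h ∘ₗ d = LinearMap.id := by
  obtain ⟨s, hs⟩ := d.rangeRestrict.exists_rightInverse_of_surjective d.range_rangeRestrict
  obtain ⟨s', hs'⟩ := s.exists_extend
  have d_s' {y : V} (hy : d y = 0) : d (s' y) = y := by
    have hy' := (hd y).1 hy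
    have : s' y = s ⟨y, hy'⟩ := LinearMap.congr_fun hs' ⟨y, hy'⟩
    rw [this]
    exact congrArg Subtype.val (LinearMap.congr_fun hs ⟨y, hy'⟩)
  have d_sq (x : V) : d (d x) = 0 := (hd _).2 ⟨x, rfl⟩
  refine ⟨s' ∘ₗ (LinearMap.id - s' ∘ₗ d), LinearMap.ext fun x => ?_⟩
  have hx : d (x - s' (d x)) = 0 := by rw [map_sub, d_s' (d_sq x), sub_self]
  simp [d_s' hx, -map_sub, d_sq]

theorem exact_of_retract {R V W : Type*} [Ring R] [AddCommGroup V] [Module R V]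
    [AddCommGroup W] [Module R W] {dV : V →ₗ[R] V} {dW : W →ₗ[R] W} {j : V →ₗ[R] W}
    {r : W →ₗ[R] V} (hj : dW ∘ₗ j = j ∘ₗ dV) (hr : dV ∘ₗ r = r ∘ₗ dW)
    (hrj : r ∘ₗ j = LinearMap.id) (hW : Function.Exact dW dW) : Function.Exact dV dV := by
  have r_j (x : V) : r (j x) = x := LinearMap.congr_fun hrj x
  have j_d (x : V) : dW (j x) = j (dV x) := LinearMap.congr_fun hj x
  have r_d (y : W) : dV (r y) = r (dW y) := LinearMap.congr_fun hr y
  intro x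
  constructor
  · intro hx
    obtain ⟨y, hy⟩ := (hW (j x)).1 (by rw [j_d, hx, map_zero])
    exact ⟨r y, by rw [r_d, hy, r_j]⟩
  · rintro ⟨y, rfl⟩
    rw [← r_j y, r_d, r_d, (hW _).2 ⟨j y, rfl⟩, map_zero]

end Contraction

section Cone

variable {V W : Type} [AddCommGroup V] [Module ℚ V] [AddCommGroup W] [Module ℚ W]

/-- The differential `(v, w) ↦ (-dv, f v + dw)` of the mapping cone of `f`, whose underlying
graded module is `V[1] × W`. -/
def coneDiff (dV : V →ₗ[ℚ] V) (dW : W →ₗ[ℚ] W) (f : V →ₗ[ℚ] W) : V × W →ₗ[ℚ] V × W :=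
  (-dV ∘ₗ LinearMap.fst ℚ V W).prod (f.coprod dW)

theorem coneDiff_apply (dV : V →ₗ[ℚ] V) (dW : W →ₗ[ℚ] W) (f : V →ₗ[ℚ] W) (x : V × W) :
    coneDiff dV dW f x = (-dV x.1, f x.1 + dW x.2) := rfl

theorem coneDiff_comp_inl (dV : V →ₗ[ℚ] V) (dW : W →ₗ[ℚ] W) (f : V →ₗ[ℚ] W) :
    coneDiff dV dW f ∘ₗ LinearMap.inl ℚ V W =
      -(LinearMap.inl ℚ V W ∘ₗ dV) + LinearMap.inr ℚ V W ∘ₗ f :=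
  LinearMap.ext fun v => by simp [coneDiff_apply]

theorem coneDiff_comp_inr (dV : V →ₗ[ℚ] V) (dW : W →ₗ[ℚ] W) (f : V →ₗ[ℚ] W) :
    coneDiff dV dW f ∘ₗ LinearMap.inr ℚ V W = LinearMap.inr ℚ V W ∘ₗ dW :=
  LinearMap.ext fun w => by simp [coneDiff_apply]

theorem coneDiff_comp_self {dV : V →ₗ[ℚ] V} {dW : W →ₗ[ℚ] W} {f : V →ₗ[ℚ] W}
    (hV : dV ∘ₗ dV = 0) (hW : dW ∘ₗ dW = 0) (hf : f ∘ₗ dV = dW ∘ₗ f) :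
    coneDiff dV dW f ∘ₗ coneDiff dV dW f = 0 := by
  ext x
  · simpa [coneDiff_apply] using LinearMap.congr_fun hV x
  · simpa [coneDiff_apply, neg_add_eq_zero] using LinearMap.congr_fun hf x
  · simp [coneDiff_apply]
  · simpa [coneDiff_apply] using LinearMap.congr_fun hW x

theorem prodMap_comp_coneDiff {V' W' : Type} [AddCommGroup V'] [Module ℚ V'] [AddCommGroup W']
    [Module ℚ W'] {dV : V →ₗ[ℚ] V} {dW : W →ₗ[ℚ] W} {f : V →ₗ[ℚ] W} {dV' : V' →ₗ[ℚ] V'}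
    {dW' : W' →ₗ[ℚ] W'} {f' : V' →ₗ[ℚ] W'} {a : V →ₗ[ℚ] V'} {b : W →ₗ[ℚ] W'}
    (ha : a ∘ₗ dV = dV' ∘ₗ a) (hb : b ∘ₗ dW = dW' ∘ₗ b) (hf : f' ∘ₗ a = b ∘ₗ f) :
    a.prodMap b ∘ₗ coneDiff dV dW f = coneDiff dV' dW' f' ∘ₗ a.prodMap b := by
  have ha' (v : V) : a (dV v) = dV' (a v) := LinearMap.congr_fun ha v
  have hb' (w : W) : b (dW w) = dW' (b w) := LinearMap.congr_fun hb w
  have hf' (v : V) : f' (a v) = b (f v) := LinearMap.congr_fun hf v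
  exact LinearMap.ext fun x => by simp [coneDiff_apply, ha', hb', hf']

theorem isQuasiIso_iff_exact_coneDiff {dV : V →ₗ[ℚ] V} {dW : W →ₗ[ℚ] W} {f : V →ₗ[ℚ] W}
    (hV : dV ∘ₗ dV = 0) (hW : dW ∘ₗ dW = 0) (hf : f ∘ₗ dV = dW ∘ₗ f) :
    IsQuasiIso dV dW f ↔ Function.Exact (coneDiff dV dW f) (coneDiff dV dW f) := by
  have f_d (x : V) : f (dV x) = dW (f x) := LinearMap.congr_fun hf x
  constructor
  · rintro ⟨hinj, hsurj⟩ ⟨v, w⟩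
    refine ⟨fun h => ?_, ?_⟩
    · rw [coneDiff_apply, Prod.mk_eq_zero, neg_eq_zero] at h
      obtain ⟨hv, hvw⟩ := h
      obtain ⟨z, rfl⟩ := hinj v hv ⟨-w, by rw [map_neg, eq_neg_of_add_eq_zero_left hvw]⟩
      obtain ⟨x, hx, y, hy⟩ := hsurj (w + f z) (by rw [map_add, ← f_d, add_comm, hvw])
      refine ⟨(x - z, y), ?_⟩
      rw [coneDiff_apply, ← hy]
      simp [hx]
    · rintro ⟨x, hx⟩
      rw [← hx]
      exact LinearMap.congr_fun (coneDiff_comp_self hV hW hf) x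
  · intro h
    have exists_preimage {v : V} {w : W} (hv : dV v = 0) (hvw : f v + dW w = 0) :
        ∃ x y, -dV x = v ∧ f x + dW y = w := by
      obtain ⟨⟨x, y⟩, hxy⟩ := (h (v, w)).1 (by simp [coneDiff_apply, hv, hvw])
      exact ⟨x, y, Prod.ext_iff.1 hxy⟩
    refine ⟨fun v hv ⟨y, hy⟩ => ?_, fun w hw => ?_⟩
    · obtain ⟨x, -, hx, -⟩ := exists_preimage (w := -y) hv (by simp [hy])
      exact ⟨-x, by rw [map_neg, hx]⟩
    · obtain ⟨x, y, hx, hy⟩ := exists_preimage (v := 0) (w := w) (map_zero _) (by simp [hw])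
      exact ⟨x, neg_eq_zero.1 hx, y, by rw [← hy, add_sub_cancel_left]⟩

end Cone

section Grading

variable {V W : Type} [AddCommGroup V] [Module ℚ V] [AddCommGroup W] [Module ℚ W]

theorem neg_one_zpow_mul_self (n : ℤ) : (-1 : ℚ) ^ n * (-1) ^ n = 1 := by
  rw [← mul_zpow]; simp

theorem ext_homogeneous (g : ℤ → Submodule ℚ V) [DirectSum.Decomposition g]
    {f f' : V →ₗ[ℚ] W} (h : ∀ n, ∀ x ∈ g n, f x = f' x) : f = f' :=
  DirectSum.decompose_lhom_ext g fun n => LinearMap.ext fun x => h n x x.2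

theorem parityOf_of_mem (g : ℤ → Submodule ℚ V) [DirectSum.Decomposition g] {n : ℤ} {x : V}
    (hx : x ∈ g n) : parityOf g x = (-1 : ℚ) ^ n • x := by
  rw [parityOf, signOpOf, LinearMap.comp_apply, LinearEquiv.coe_coe,
    DirectSum.decomposeLinearEquiv_apply, DirectSum.decompose_of_mem g hx]
  erw [DirectSum.toModule_lof]
  simp

theorem parityOf_mem (g : ℤ → Submodule ℚ V) [DirectSum.Decomposition g] {n : ℤ} {x : V}
    (hx : x ∈ g n) : parityOf g x ∈ g n :=
  parityOf_of_mem g hx ▸ Submodule.smul_mem _ _ hx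

theorem parityOf_parityOf (g : ℤ → Submodule ℚ V) [DirectSum.Decomposition g] (x : V) :
    parityOf g (parityOf g x) = x := by
  have : parityOf g ∘ₗ parityOf g = LinearMap.id :=
    ext_homogeneous g fun n x hx => by
      simp [parityOf_of_mem g hx, smul_smul, neg_one_zpow_mul_self]
  exact LinearMap.congr_fun this x

theorem parityOf_comp_of_mem_sub_one {g : ℤ → Submodule ℚ V} {g' : ℤ → Submodule ℚ W}
    [DirectSum.Decomposition g] [DirectSum.Decomposition g'] {u : V →ₗ[ℚ] W}
    (hu : ∀ n, ∀ x ∈ g n, u x ∈ g' (n - 1)) :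
    parityOf g' ∘ₗ u = -(u ∘ₗ parityOf g) :=
  ext_homogeneous g fun n x hx => by
    simp [parityOf_of_mem g hx, parityOf_of_mem g' (hu n x hx), zpow_sub_one₀]

theorem tensorGrading_le {g : ℤ → Submodule ℚ V} {g' : ℤ → Submodule ℚ W} {n : ℤ}
    {Q : Submodule ℚ (V ⊗[ℚ] W)}
    (h : ∀ i j, i + j = n → ∀ v ∈ g i, ∀ w ∈ g' j, v ⊗ₜ w ∈ Q) : tensorGrading g g' n ≤ Q := by
  refine iSup_le fun ⟨⟨i, j⟩, hij⟩ => ?_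
  rw [TensorProduct.range_map, Submodule.range_subtype, Submodule.range_subtype]
  exact Submodule.map₂_le.2 (h i j hij)

theorem tmul_mem_tensorGrading {g : ℤ → Submodule ℚ V} {g' : ℤ → Submodule ℚ W} {i j n : ℤ}
    (h : i + j = n) {v : V} {w : W} (hv : v ∈ g i) (hw : w ∈ g' j) :
    v ⊗ₜ w ∈ tensorGrading g g' n :=
  Submodule.mem_iSup_of_mem ⟨(i, j), h⟩ ⟨(⟨v, hv⟩ : g i) ⊗ₜ (⟨w, hw⟩ : g' j), rfl⟩

theorem map_mem_tensorGrading {V' W' : Type} [AddCommGroup V'] [Module ℚ V'] [AddCommGroup W']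
    [Module ℚ W'] {g : ℤ → Submodule ℚ V} {h : ℤ → Submodule ℚ W} {g' : ℤ → Submodule ℚ V'}
    {h' : ℤ → Submodule ℚ W'} {u : V →ₗ[ℚ] V'} {v : W →ₗ[ℚ] W'} {k : ℤ}
    (hu : ∀ n, ∀ x ∈ g n, u x ∈ g' n) (hv : ∀ n, ∀ x ∈ h n, v x ∈ h' (n + k)) {n : ℤ}
    {z : V ⊗[ℚ] W} (hz : z ∈ tensorGrading g h n) :
    TensorProduct.map u v z ∈ tensorGrading g' h' (n + k) := by
  refine tensorGrading_le (Q := (tensorGrading g' h' (n + k)).comap (TensorProduct.map u v))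
    (fun i j hij a ha b hb => ?_) hz
  exact tmul_mem_tensorGrading (by omega) (hu i a ha) (hv j b hb)

theorem map_parityOf_of_mem_tensorGrading (g : ℤ → Submodule ℚ V) (g' : ℤ → Submodule ℚ W)
    [DirectSum.Decomposition g] [DirectSum.Decomposition g'] {n : ℤ} {z : V ⊗[ℚ] W}
    (hz : z ∈ tensorGrading g g' n) :
    TensorProduct.map (parityOf g) (parityOf g') z = (-1 : ℚ) ^ n • z := by
  refine tensorGrading_le (Q := LinearMap.eqLocus (TensorProduct.map (parityOf g) (parityOf g'))
    ((-1 : ℚ) ^ n • LinearMap.id)) (fun i j hij v hv w hw => ?_) hz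
  rw [LinearMap.mem_eqLocus, TensorProduct.map_tmul, parityOf_of_mem g hv, parityOf_of_mem g' hw,
    TensorProduct.smul_tmul_smul, ← hij, zpow_add₀ (by norm_num)]
  rfl

theorem iSup_map₂_mk_top_right (g : ℤ → Submodule ℚ V) [DirectSum.Decomposition g] :
    ⨆ i, Submodule.map₂ (TensorProduct.mk ℚ V W) (g i) ⊤ = ⊤ := by
  rw [← Submodule.map₂_iSup_left, (DirectSum.Decomposition.isInternal g).submodule_iSup_eq_top,
    TensorProduct.map₂_mk_top_top_eq_top]

theorem iSup_map₂_mk_top_left (g : ℤ → Submodule ℚ W) [DirectSum.Decomposition g] :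
    ⨆ i, Submodule.map₂ (TensorProduct.mk ℚ V W) ⊤ (g i) = ⊤ := by
  rw [← Submodule.map₂_iSup_right, (DirectSum.Decomposition.isInternal g).submodule_iSup_eq_top,
    TensorProduct.map₂_mk_top_top_eq_top]

end Grading

section GradedContraction

variable {V : Type} [AddCommGroup V] [Module ℚ V]

theorem exists_degree_component (g : ℤ → Submodule ℚ V) [DirectSum.Decomposition g]
    (h : V →ₗ[ℚ] V) (k : ℤ) :
    ∃ h' : V →ₗ[ℚ] V, ∀ n, ∀ x ∈ g n, h' x = DirectSum.decompose g (h x) (n + k) := by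
  refine ⟨(DirectSum.toModule ℚ ℤ V fun n => (g (n + k)).subtype ∘ₗ
    DirectSum.component ℚ ℤ _ (n + k) ∘ₗ (DirectSum.decomposeLinearEquiv g).toLinearMap ∘ₗ
      h ∘ₗ (g n).subtype) ∘ₗ (DirectSum.decomposeLinearEquiv g).toLinearMap,
    fun n x hx => ?_⟩
  rw [LinearMap.comp_apply, LinearEquiv.coe_coe, DirectSum.decomposeLinearEquiv_apply,
    DirectSum.decompose_of_mem g hx]
  erw [DirectSum.toModule_lof]
  rfl

theorem decompose_apply_of_mem_sub_one (g : ℤ → Submodule ℚ V) [DirectSum.Decomposition g]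
    {d : V →ₗ[ℚ] V} (hd : ∀ n, ∀ x ∈ g n, d x ∈ g (n - 1)) (x : V) (n : ℤ) :
    (DirectSum.decompose g (d x) (n - 1) : V) = d (DirectSum.decompose g x n) := by
  induction x using DirectSum.Decomposition.inductionOn g with
  | zero => simp
  | @homogeneous i x =>
    by_cases hi : i = n
    · subst hi
      rw [DirectSum.decompose_of_mem_same g (hd i x x.2), DirectSum.decompose_of_mem_same g x.2]
    · rw [DirectSum.decompose_of_mem_ne g (hd i x x.2) (by omega),
        DirectSum.decompose_of_mem_ne g x.2 hi, map_zero]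
  | add x y hx hy => simp [DirectSum.decompose_add, hx, hy]

theorem exists_graded_contraction (g : ℤ → Submodule ℚ V) [DirectSum.Decomposition g]
    {d : V →ₗ[ℚ] V} (hdeg : ∀ n, ∀ x ∈ g n, d x ∈ g (n - 1)) (hd : Function.Exact d d) :
    ∃ h : V →ₗ[ℚ] V, (∀ n, ∀ x ∈ g n, h x ∈ g (n + 1)) ∧ d ∘ₗ h + h ∘ₗ d = LinearMap.id := by
  obtain ⟨h, hh⟩ := exists_contraction hd
  obtain ⟨h₁, hh₁⟩ := exists_degree_component g h 1
  refine ⟨h₁, fun n x hx => hh₁ n x hx ▸ SetLike.coe_mem _,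
    ext_homogeneous g fun n x hx => ?_⟩
  have hx' : d (h x) + h (d x) = x := LinearMap.congr_fun hh x
  have hn : (DirectSum.decompose g (d (h x) + h (d x)) n : V) = x := by
    rw [hx', DirectSum.decompose_of_mem_same g hx]
  simp only [LinearMap.add_apply, LinearMap.comp_apply, LinearMap.id_apply]
  rw [hh₁ n x hx, hh₁ (n - 1) (d x) (hdeg n x hx), ← decompose_apply_of_mem_sub_one g hdeg,
    add_sub_cancel_right, sub_add_cancel]
  simpa [DirectSum.decompose_add] using hn

end GradedContraction

section TensorDiff

open TensorProduct

variable {W : Type} [AddCommGroup W] [Module ℚ W]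

namespace DGVect

theorem parityOf_d (V : DGVect) (v : V.carrier) :
    parityOf V.grading (V.d v) = -V.d (parityOf V.grading v) :=
  LinearMap.congr_fun (parityOf_comp_of_mem_sub_one V.d_mem) v

/-- The differential `v ⊗ w ↦ dv ⊗ w + (-1)^{|v|} v ⊗ dw` of the tensor product of complexes.
Only the left factor has to be graded. -/
def tensorDiff (V : DGVect) (dW : W →ₗ[ℚ] W) : V.carrier ⊗[ℚ] W →ₗ[ℚ] V.carrier ⊗[ℚ] W :=
  map V.d LinearMap.id + map (parityOf V.grading) dW

theorem tensorDiff_tmul (V : DGVect) (dW : W →ₗ[ℚ] W) (v : V.carrier) (w : W) :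
    V.tensorDiff dW (v ⊗ₜ w) = V.d v ⊗ₜ w + parityOf V.grading v ⊗ₜ dW w := rfl

theorem tensorDiff_comp_self (V : DGVect) (dW : W →ₗ[ℚ] W) :
    V.tensorDiff dW ∘ₗ V.tensorDiff dW = map LinearMap.id (dW ∘ₗ dW) := by
  refine TensorProduct.ext' fun v w => ?_
  have d_sq : V.d (V.d v) = 0 := LinearMap.congr_fun V.d_sq v
  simp [tensorDiff_tmul, d_sq, parityOf_d, parityOf_parityOf, neg_tmul]

theorem tensorDiff_contraction (V : DGVect) {dW h : W →ₗ[ℚ] W}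
    (hh : dW ∘ₗ h + h ∘ₗ dW = LinearMap.id) :
    V.tensorDiff dW ∘ₗ map (parityOf V.grading) h + map (parityOf V.grading) h ∘ₗ V.tensorDiff dW
      = LinearMap.id := by
  refine TensorProduct.ext' fun v w => ?_
  have hw : dW (h w) + h (dW w) = w := LinearMap.congr_fun hh w
  simp only [LinearMap.add_apply, LinearMap.comp_apply, map_tmul, tensorDiff_tmul, map_add,
    parityOf_d, parityOf_parityOf, neg_tmul, LinearMap.id_apply]
  conv_rhs => rw [← hw, tmul_add]
  abel

end DGVect

namespace DGAlgebra

theorem d_mul (A : DGAlgebra) (a b : A.carrier) :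
    A.d (A.mul a b) = A.mul (A.d a) b + A.mul (parityOf A.grading a) (A.d b) := by
  have : A.mul.compr₂ A.d = A.mul ∘ₗ A.d + (A.mul.compl₂ A.d) ∘ₗ parityOf A.grading :=
    ext_homogeneous A.grading fun i a ha => LinearMap.ext fun b => by
      simp [A.leibniz i a b ha, parityOf_of_mem A.grading ha]
  exact LinearMap.congr_fun₂ this a b

theorem parityOf_mul (A : DGAlgebra) (a b : A.carrier) :
    parityOf A.grading (A.mul a b) = A.mul (parityOf A.grading a) (parityOf A.grading b) := by
  have : A.mul.compr₂ (parityOf A.grading) =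
      (A.mul.compl₂ (parityOf A.grading)) ∘ₗ parityOf A.grading :=
    ext_homogeneous A.grading fun i a ha => ext_homogeneous A.grading fun j b hb => by
      simp [parityOf_of_mem A.grading ha, parityOf_of_mem A.grading hb,
        parityOf_of_mem A.grading (A.mul_mem i j a b ha hb), smul_smul,
        zpow_add₀ (show (-1 : ℚ) ≠ 0 by norm_num)]
  exact LinearMap.congr_fun₂ this a b

theorem parityOf_one (A : DGAlgebra) : parityOf A.grading A.one = A.one := by
  simp [parityOf_of_mem A.grading A.one_mem]

theorem d_one (A : DGAlgebra) : A.d A.one = 0 := by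
  simpa [A.one_mul', A.mul_one', A.parityOf_one] using A.d_mul A.one A.one

end DGAlgebra

namespace DGCoalgebra

theorem comul_comp_parityOf (C : DGCoalgebra) :
    C.comul ∘ₗ parityOf C.grading =
      map (parityOf C.grading) (parityOf C.grading) ∘ₗ C.comul :=
  ext_homogeneous C.grading fun n x hx => by
    simp [parityOf_of_mem C.grading hx,
      map_parityOf_of_mem_tensorGrading _ _ (C.comul_mem n x hx)]

theorem counit_comp_parityOf (C : DGCoalgebra) : C.counit ∘ₗ parityOf C.grading = C.counit :=
  ext_homogeneous C.grading fun n x hx => by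
    obtain rfl | hn := eq_or_ne n 0
    · simp [parityOf_of_mem C.grading hx]
    · simp [parityOf_of_mem C.grading hx, C.counit_zero n hn x hx]

end DGCoalgebra

end TensorDiff

section Coextension

open TensorProduct

/-- The insertion `v ↦ v ⊗ m`, through which the Sweedler components of `Δc` enter `C ⊗ M`. -/
def tmulRight (V : Type) {M : Type} [AddCommGroup V] [Module ℚ V] [AddCommGroup M] [Module ℚ M]
    (m : M) : V →ₗ[ℚ] V ⊗[ℚ] M :=
  (TensorProduct.mk ℚ V M).flip m

theorem tmulRight_apply {V M : Type} [AddCommGroup V] [Module ℚ V] [AddCommGroup M] [Module ℚ M]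
    (m : M) (v : V) : tmulRight V m v = v ⊗ₜ m := rfl

namespace DGCoalgebra

variable (C : DGCoalgebra) {M M' : Type} [AddCommGroup M] [Module ℚ M] [AddCommGroup M']
  [Module ℚ M']

theorem coextCoact_comp_tmulRight (m : M) :
    coextCoact C M ∘ₗ tmulRight C.carrier m =
      map LinearMap.id (tmulRight C.carrier m) ∘ₗ C.comul := by
  have : (TensorProduct.assoc ℚ C.carrier C.carrier M).toLinearMap ∘ₗ tmulRight _ m =
      map LinearMap.id (tmulRight C.carrier m) := TensorProduct.ext' fun _ _ => rfl
  rw [← this]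
  rfl

theorem coextCoact_tmul (c : C.carrier) (m : M) :
    coextCoact C M (c ⊗ₜ m) = map LinearMap.id (tmulRight C.carrier m) (C.comul c) :=
  LinearMap.congr_fun (C.coextCoact_comp_tmulRight m) c

theorem coextCoact_comp_map {u : C.carrier →ₗ[ℚ] C.carrier}
    (hu : C.comul ∘ₗ u = map u u ∘ₗ C.comul) (f : M →ₗ[ℚ] M') :
    coextCoact C M' ∘ₗ map u f = map u (map u f) ∘ₗ coextCoact C M := by
  rw [coextCoact, coextCoact, LinearMap.comp_assoc, ← map_comp, hu, LinearMap.id_comp,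
    ← LinearMap.comp_assoc, map_map_comp_assoc_eq, LinearMap.comp_assoc, ← map_comp,
    LinearMap.comp_id]

theorem coextCoact_comp_coextCoact :
    coextCoact C (C.carrier ⊗[ℚ] M) ∘ₗ coextCoact C M =
      map LinearMap.id (coextCoact C M) ∘ₗ coextCoact C M := by
  refine TensorProduct.ext' fun c m => ?_
  have natural := C.coextCoact_comp_map (u := LinearMap.id)
    (by rw [map_id, LinearMap.comp_id, LinearMap.id_comp]) (tmulRight C.carrier m)
  have coassoc : coextCoact C C.carrier (C.comul c) = map LinearMap.id C.comul (C.comul c) :=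
    LinearMap.congr_fun C.coassoc c
  simp only [LinearMap.comp_apply, coextCoact_tmul]
  rw [← LinearMap.comp_apply, natural, LinearMap.comp_apply, coassoc]
  rw [map_map, map_map, coextCoact_comp_tmulRight]

theorem coextCoact_comp_map_d :
    coextCoact C M ∘ₗ map C.d LinearMap.id =
      C.tensorDiff (map C.d LinearMap.id) ∘ₗ coextCoact C M := by
  refine TensorProduct.ext' fun c m => ?_
  have comul_d : C.comul (C.d c) = C.tensorDiff C.d (C.comul c) :=
    LinearMap.congr_fun C.comul_chain c
  have tmulRight_d : tmulRight C.carrier m ∘ₗ C.d = map C.d LinearMap.id ∘ₗ tmulRight _ m := rfl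
  have natural : map LinearMap.id (tmulRight C.carrier m) ∘ₗ C.tensorDiff C.d =
      C.tensorDiff (map C.d LinearMap.id) ∘ₗ map LinearMap.id (tmulRight _ m) := by
    simp only [DGVect.tensorDiff, LinearMap.comp_add, LinearMap.add_comp, ← map_comp,
      LinearMap.id_comp, LinearMap.comp_id, tmulRight_d]
  simp only [LinearMap.comp_apply, map_tmul, LinearMap.id_apply, coextCoact_tmul, comul_d]
  exact LinearMap.congr_fun natural (C.comul c)

/-- The projection `c ⊗ m ↦ ε(c) m` of the cofree comodule `C ⊗ M` onto `M`. -/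
def counitProj (M : Type) [AddCommGroup M] [Module ℚ M] : C.carrier ⊗[ℚ] M →ₗ[ℚ] M :=
  (TensorProduct.lid ℚ M).toLinearMap ∘ₗ map C.counit LinearMap.id

theorem counitProj_tmul (c : C.carrier) (m : M) : C.counitProj M (c ⊗ₜ m) = C.counit c • m :=
  rfl

theorem counitProj_comp_map {u : C.carrier →ₗ[ℚ] C.carrier} (hu : C.counit ∘ₗ u = C.counit)
    (f : M →ₗ[ℚ] M') : C.counitProj M' ∘ₗ map u f = f ∘ₗ C.counitProj M :=
  TensorProduct.ext' fun c m => by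
    have : C.counit (u c) = C.counit c := LinearMap.congr_fun hu c
    simp [counitProj_tmul, this]

theorem map_counitProj_comp_coextCoact :
    map LinearMap.id (C.counitProj M) ∘ₗ coextCoact C M = LinearMap.id := by
  refine TensorProduct.ext' fun c m => ?_
  have factor : map LinearMap.id (C.counitProj M ∘ₗ tmulRight _ m) =
      tmulRight C.carrier m ∘ₗ (TensorProduct.rid ℚ C.carrier).toLinearMap ∘ₗ
        map LinearMap.id C.counit :=
    TensorProduct.ext' fun a b => by simp [tmulRight_apply, counitProj_tmul]
  have counit : TensorProduct.rid ℚ _ (map LinearMap.id C.counit (C.comul c)) = c :=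
    LinearMap.congr_fun C.counit_comul_right c
  rw [LinearMap.comp_apply, coextCoact_tmul, map_map, LinearMap.id_comp, factor]
  simp [tmulRight_apply, counit]

theorem counitProj_comp_coextCoact :
    C.counitProj (C.carrier ⊗[ℚ] M) ∘ₗ coextCoact C M = LinearMap.id := by
  refine TensorProduct.ext' fun c m => ?_
  have counit : C.counitProj C.carrier (C.comul c) = c :=
    LinearMap.congr_fun C.counit_comul_left c
  rw [LinearMap.comp_apply, coextCoact_tmul, ← LinearMap.comp_apply,
    C.counitProj_comp_map (LinearMap.comp_id _), LinearMap.comp_apply, counit]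
  rfl

section CoextDiff

variable (dM : M →ₗ[ℚ] M) (act : C.carrier ⊗[ℚ] M →ₗ[ℚ] M)

theorem coextCoact_comp_coextDiffFrom :
    coextCoact C M ∘ₗ coextDiffFrom C M dM act =
      C.tensorDiff (coextDiffFrom C M dM act) ∘ₗ coextCoact C M := by
  have twisted : coextCoact C M ∘ₗ map (parityOf C.grading) act ∘ₗ coextCoact C M =
      map (parityOf C.grading) (map (parityOf C.grading) act ∘ₗ coextCoact C M) ∘ₗ
        coextCoact C M := by
    rw [← LinearMap.comp_assoc, C.coextCoact_comp_map C.comul_comp_parityOf, LinearMap.comp_assoc,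
      coextCoact_comp_coextCoact, ← LinearMap.comp_assoc, ← map_comp, LinearMap.comp_id]
  rw [coextDiffFrom, LinearMap.comp_add, LinearMap.comp_add, twisted, coextCoact_comp_map_d,
    C.coextCoact_comp_map C.comul_comp_parityOf]
  simp only [DGVect.tensorDiff, map_add_right, LinearMap.add_comp]
  abel

theorem counitProj_comp_coextDiffFrom :
    C.counitProj M ∘ₗ coextDiffFrom C M dM act = dM ∘ₗ C.counitProj M + act := by
  have counit_d : C.counitProj M ∘ₗ map C.d LinearMap.id = 0 := by
    rw [counitProj, LinearMap.comp_assoc, ← map_comp, C.counit_chain, map_zero_left,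
      LinearMap.comp_zero]
  rw [coextDiffFrom, LinearMap.comp_add, LinearMap.comp_add, counit_d, zero_add,
    ← LinearMap.comp_assoc (coextCoact C M),
    C.counitProj_comp_map C.counit_comp_parityOf, C.counitProj_comp_map C.counit_comp_parityOf,
    LinearMap.comp_assoc, counitProj_comp_coextCoact, LinearMap.comp_id]

variable {dM act}

theorem coextDiffFrom_comp_self (hdM : dM ∘ₗ dM = 0)
    (hact : dM ∘ₗ act + act ∘ₗ coextDiffFrom C M dM act = 0) :
    coextDiffFrom C M dM act ∘ₗ coextDiffFrom C M dM act = 0 := by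
  set E := coextDiffFrom C M dM act with hE
  have proj_sq : C.counitProj M ∘ₗ E ∘ₗ E = 0 := by
    rw [← LinearMap.comp_assoc, hE, counitProj_comp_coextDiffFrom, LinearMap.add_comp,
      LinearMap.comp_assoc, counitProj_comp_coextDiffFrom, LinearMap.comp_add,
      ← LinearMap.comp_assoc, hdM, LinearMap.zero_comp, zero_add, hact]
  have coact_sq : coextCoact C M ∘ₗ E ∘ₗ E = map LinearMap.id (E ∘ₗ E) ∘ₗ coextCoact C M := by
    rw [← LinearMap.comp_assoc, coextCoact_comp_coextDiffFrom, LinearMap.comp_assoc,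
      coextCoact_comp_coextDiffFrom, ← LinearMap.comp_assoc, DGVect.tensorDiff_comp_self]
  calc E ∘ₗ E = (map LinearMap.id (C.counitProj M) ∘ₗ coextCoact C M) ∘ₗ E ∘ₗ E := by
        rw [map_counitProj_comp_coextCoact, LinearMap.id_comp]
    _ = map LinearMap.id (C.counitProj M ∘ₗ E ∘ₗ E) ∘ₗ coextCoact C M := by
        rw [LinearMap.comp_assoc, coact_sq, ← LinearMap.comp_assoc, ← map_comp, LinearMap.id_comp]
    _ = 0 := by rw [proj_sq, map_zero_right, LinearMap.zero_comp]

theorem exact_coextDiffFrom (hdM : Function.Exact dM dM)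
    (hact : dM ∘ₗ act + act ∘ₗ coextDiffFrom C M dM act = 0)
    (hact₀ : ∀ c ∈ C.grading 0, ∀ m, act (c ⊗ₜ m) = 0) :
    Function.Exact (coextDiffFrom C M dM act) (coextDiffFrom C M dM act) := by
  obtain ⟨h, hh⟩ := exists_contraction hdM
  let S (i : ℤ) := Submodule.map₂ (TensorProduct.mk ℚ C.carrier M) (C.grading i) ⊤
  have tmul_mem {i : ℤ} {c : C.carrier} (hc : c ∈ C.grading i) (m : M) : c ⊗ₜ m ∈ S i :=
    Submodule.apply_mem_map₂ _ hc Submodule.mem_top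
  refine exact_add_of_lowers
    (C.coextDiffFrom_comp_self hdM.linearMap_comp_eq_zero hact) (C.tensorDiff_contraction hh) S
    (iSup_map₂_mk_top_right C.grading) (b := 0) (fun i hi => ?_) 0 (fun i => ?_) fun i => ?_
  · simp [S, C.nonneg i hi]
  · exact Submodule.map₂_le.2 fun c hc m _ => by
      simpa using tmul_mem (parityOf_mem C.grading hc) (h m)
  · refine Submodule.map₂_le.2 fun c hc m _ => ?_
    rw [mk_apply, Submodule.mem_comap, LinearMap.comp_apply, coextCoact_tmul, map_map,
      LinearMap.comp_id, ← Submodule.mem_comap]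
    refine tensorGrading_le (fun p q hpq a ha b hb => ?_) (C.comul_mem i c hc)
    rw [Submodule.mem_comap, map_tmul, LinearMap.comp_apply, tmulRight_apply]
    obtain hq | rfl | hq := lt_trichotomy q 0
    · have : b = 0 := by simpa [C.nonneg q hq] using hb
      simp [this]
    · simp [hact₀ b hb m]
    · exact Submodule.mem_iSup_of_mem p <| Submodule.mem_iSup_of_mem (by omega) <|
        tmul_mem (parityOf_mem C.grading ha) _

end CoextDiff

end DGCoalgebra

namespace DGComodule

variable {C : DGCoalgebra} (K : DGComodule C) {V : Type} [AddCommGroup V] [Module ℚ V]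
  {u : C.carrier →ₗ[ℚ] C.carrier}

theorem coextCoact_comp_map_comp_coact (hu : C.comul ∘ₗ u = map u u ∘ₗ C.comul)
    (j : K.carrier →ₗ[ℚ] V) :
    coextCoact C V ∘ₗ map u j ∘ₗ K.coact = map u (map u j ∘ₗ K.coact) ∘ₗ K.coact := by
  have coassoc : coextCoact C K.carrier ∘ₗ K.coact = map LinearMap.id K.coact ∘ₗ K.coact :=
    K.coassoc
  rw [← LinearMap.comp_assoc, C.coextCoact_comp_map hu, LinearMap.comp_assoc, coassoc,
    ← LinearMap.comp_assoc, ← map_comp, LinearMap.comp_id]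

theorem counitProj_comp_map_comp_coact (hu : C.counit ∘ₗ u = C.counit) (j : K.carrier →ₗ[ℚ] V) :
    C.counitProj V ∘ₗ map u j ∘ₗ K.coact = j := by
  have counit_coact : C.counitProj K.carrier ∘ₗ K.coact = LinearMap.id := K.counit_coact
  rw [← LinearMap.comp_assoc, C.counitProj_comp_map hu, LinearMap.comp_assoc, counit_coact,
    LinearMap.comp_id]

end DGComodule

end Coextension

section Extension

open TensorProduct

section ExtAction

variable (A : DGAlgebra) {K : Type} [AddCommGroup K] [Module ℚ K]

theorem extAction_tmul (a b : A.carrier) (k : K) :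
    extAction A K (a ⊗ₜ (b ⊗ₜ k)) = A.mul a b ⊗ₜ k := rfl

theorem extAction_one_tmul (x : A.carrier ⊗[ℚ] K) : extAction A K (A.one ⊗ₜ x) = x := by
  induction x with
  | zero => simp
  | tmul b k => rw [extAction_tmul, A.one_mul']
  | add x y hx hy => rw [tmul_add, map_add, hx, hy]

theorem extAction_tmul_one_tmul (a : A.carrier) (k : K) :
    extAction A K (a ⊗ₜ (A.one ⊗ₜ k)) = a ⊗ₜ k := by
  rw [extAction_tmul, A.mul_one']

theorem extAction_mul_tmul (a b : A.carrier) (x : A.carrier ⊗[ℚ] K) :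
    extAction A K (A.mul a b ⊗ₜ x) = extAction A K (a ⊗ₜ extAction A K (b ⊗ₜ x)) := by
  induction x with
  | zero => simp
  | tmul c k => rw [extAction_tmul, extAction_tmul, extAction_tmul, A.mul_assoc']
  | add x y hx hy => simp only [tmul_add, map_add, hx, hy]

end ExtAction

namespace TwistingChain

variable {C : DGCoalgebra} {A : DGAlgebra} (τ : TwistingChain C A) (K : DGComodule C)

theorem parityOf_comp_toFun :
    parityOf A.grading ∘ₗ τ.toFun = -(τ.toFun ∘ₗ parityOf C.grading) :=
  parityOf_comp_of_mem_sub_one τ.mem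

theorem toFun_eq_zero_of_lt_two (hτ₀ : ∀ c ∈ C.grading 0, τ.toFun c = 0)
    (hτ₁ : ∀ c ∈ C.grading 1, τ.toFun c = 0) {p : ℤ} (hp : p < 2) {c : C.carrier}
    (hc : c ∈ C.grading p) : τ.toFun c = 0 := by
  rcases lt_or_ge p 0 with hneg | hnonneg
  · rw [C.nonneg p hneg, Submodule.mem_bot] at hc
    rw [hc, map_zero]
  · obtain rfl | rfl : p = 0 ∨ p = 1 := by omega
    exacts [hτ₀ c hc, hτ₁ c hc]

/-- The differential of the twisted extension `A ⊗_τ K` of a dg comodule `K`. -/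
abbrev extDiff : A.carrier ⊗[ℚ] K.carrier →ₗ[ℚ] A.carrier ⊗[ℚ] K.carrier :=
  _root_.extDiff C A τ K.carrier K.d K.coact

/-- The map `k ↦ τ(k₍₀₎) ⊗ k₍₁₎`. -/
def twistedCoact : K.carrier →ₗ[ℚ] A.carrier ⊗[ℚ] K.carrier :=
  map τ.toFun LinearMap.id ∘ₗ K.coact

/-- The map `c ⊗ x ↦ τ(c) · x` entering the differential of `C ⊗^τ (A ⊗_τ K)`. -/
def twistedAction (K : Type) [AddCommGroup K] [Module ℚ K] :
    C.carrier ⊗[ℚ] (A.carrier ⊗[ℚ] K) →ₗ[ℚ] A.carrier ⊗[ℚ] K :=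
  extAction A K ∘ₗ map τ.toFun LinearMap.id

theorem twistedAction_tmul {K : Type} [AddCommGroup K] [Module ℚ K] (c : C.carrier)
    (x : A.carrier ⊗[ℚ] K) :
    τ.twistedAction K (c ⊗ₜ x) = extAction A K (τ.toFun c ⊗ₜ x) := rfl

theorem extDiff_eq : τ.extDiff K = A.tensorDiff K.d -
    extAction A K.carrier ∘ₗ map (parityOf A.grading) (τ.twistedCoact K) := by
  have : map (A.mulMap ∘ₗ map (parityOf A.grading) τ.toFun) LinearMap.id ∘ₗ
      (TensorProduct.assoc ℚ A.carrier C.carrier K.carrier).symm.toLinearMap =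
        extAction A K.carrier ∘ₗ map (parityOf A.grading) (map τ.toFun LinearMap.id) :=
    TensorProduct.ext <| LinearMap.ext fun a => TensorProduct.ext' fun c k => rfl
  rw [extDiff, _root_.extDiff, ← LinearMap.comp_assoc, this, LinearMap.comp_assoc, ← map_comp,
    LinearMap.comp_id]
  rfl

theorem extDiff_tmul (a : A.carrier) (k : K.carrier) :
    τ.extDiff K (a ⊗ₜ k) = A.d a ⊗ₜ k + parityOf A.grading a ⊗ₜ K.d k -
      extAction A K.carrier (parityOf A.grading a ⊗ₜ τ.twistedCoact K k) :=
  LinearMap.congr_fun (τ.extDiff_eq K) (a ⊗ₜ k)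

theorem extDiff_comp_extAction :
    τ.extDiff K ∘ₗ extAction A K.carrier =
      extAction A K.carrier ∘ₗ A.tensorDiff (τ.extDiff K) := by
  refine TensorProduct.ext <| LinearMap.ext fun a => TensorProduct.ext' fun b k => ?_
  change τ.extDiff K (A.mul a b ⊗ₜ k) =
    extAction A K.carrier (A.tensorDiff (τ.extDiff K) (a ⊗ₜ (b ⊗ₜ k)))
  simp only [DGVect.tensorDiff_tmul, extAction_tmul, extDiff_tmul, A.d_mul, A.parityOf_mul,
    add_tmul, tmul_add, tmul_sub, map_add, map_sub, extAction_mul_tmul]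
  abel

theorem twistedAction_comp_coextCoact (K : Type) [AddCommGroup K] [Module ℚ K] :
    extAction A K ∘ₗ map (τ.toFun ∘ₗ parityOf C.grading) (τ.twistedAction K) ∘ₗ
        coextCoact C (A.carrier ⊗[ℚ] K) =
      extAction A K ∘ₗ map (A.mulMap ∘ₗ
        map (τ.toFun ∘ₗ parityOf C.grading) τ.toFun ∘ₗ C.comul) LinearMap.id := by
  refine TensorProduct.ext' fun c x => ?_
  have merge : extAction A K ∘ₗ map (τ.toFun ∘ₗ parityOf C.grading)
      (τ.twistedAction K ∘ₗ tmulRight C.carrier x) =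
        extAction A K ∘ₗ tmulRight A.carrier x ∘ₗ A.mulMap ∘ₗ
          map (τ.toFun ∘ₗ parityOf C.grading) τ.toFun :=
    TensorProduct.ext' fun a b => (extAction_mul_tmul A _ _ x).symm
  simp only [LinearMap.comp_apply, DGCoalgebra.coextCoact_tmul, map_map, LinearMap.comp_id]
  exact LinearMap.congr_fun merge (C.comul c)

/-- The differential of the two-sided twisted tensor product `C ⊗^τ (A ⊗_τ K)`. -/
abbrev coextExtDiff :
    C.carrier ⊗[ℚ] (A.carrier ⊗[ℚ] K.carrier) →ₗ[ℚ] C.carrier ⊗[ℚ] (A.carrier ⊗[ℚ] K.carrier) :=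
  coextDiffFrom C (A.carrier ⊗[ℚ] K.carrier) (τ.extDiff K) (τ.twistedAction K.carrier)

theorem extDiff_comp_twistedAction :
    τ.extDiff K ∘ₗ τ.twistedAction K.carrier + τ.twistedAction K.carrier ∘ₗ τ.coextExtDiff K
      = 0 := by
  have left : τ.extDiff K ∘ₗ τ.twistedAction K.carrier =
      extAction A K.carrier ∘ₗ (map (A.d ∘ₗ τ.toFun) LinearMap.id -
        map (τ.toFun ∘ₗ parityOf C.grading) (τ.extDiff K)) := by
    refine TensorProduct.ext' fun c x => ?_
    have parity_apply : parityOf A.grading (τ.toFun c) = -τ.toFun (parityOf C.grading c) :=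
      LinearMap.congr_fun τ.parityOf_comp_toFun c
    calc τ.extDiff K (extAction A K.carrier (τ.toFun c ⊗ₜ x))
        = extAction A K.carrier (A.tensorDiff (τ.extDiff K) (τ.toFun c ⊗ₜ x)) :=
          LinearMap.congr_fun (τ.extDiff_comp_extAction K) _
      _ = _ := by
        rw [DGVect.tensorDiff_tmul, parity_apply, neg_tmul, ← sub_eq_add_neg]
        rfl
  have right : τ.twistedAction K.carrier ∘ₗ τ.coextExtDiff K =
      extAction A K.carrier ∘ₗ (map (τ.toFun ∘ₗ C.d) LinearMap.id +
        map (τ.toFun ∘ₗ parityOf C.grading) (τ.extDiff K)) +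
      extAction A K.carrier ∘ₗ map (A.mulMap ∘ₗ
        map (τ.toFun ∘ₗ parityOf C.grading) τ.toFun ∘ₗ C.comul) LinearMap.id := by
    rw [← twistedAction_comp_coextCoact, twistedAction, coextExtDiff, coextDiffFrom,
      LinearMap.comp_add, LinearMap.comp_assoc, LinearMap.comp_assoc, LinearMap.comp_add,
      ← LinearMap.comp_assoc (coextCoact _ _), ← map_comp, ← map_comp, ← map_comp]
    rfl
  have twist : map (A.d ∘ₗ τ.toFun) LinearMap.id + map (τ.toFun ∘ₗ C.d) LinearMap.id +
      map (A.mulMap ∘ₗ map (τ.toFun ∘ₗ parityOf C.grading) τ.toFun ∘ₗ C.comul)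
        (LinearMap.id : A.carrier ⊗[ℚ] K.carrier →ₗ[ℚ] _) = 0 := by
    rw [← map_add_left, ← map_add_left, τ.twist, map_zero_left]
  rw [left, right, ← LinearMap.comp_add, ← LinearMap.comp_add, ← add_assoc,
    sub_add_add_cancel, twist, LinearMap.comp_zero]

/-- The map `k ↦ k₍₀₎ ⊗ 1 ⊗ k₍₁₎` from `K` to `C ⊗^τ (A ⊗_τ K)`. -/
def unitCoact (A : DGAlgebra) :
    K.carrier →ₗ[ℚ] C.carrier ⊗[ℚ] (A.carrier ⊗[ℚ] K.carrier) :=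
  map LinearMap.id (TensorProduct.mk ℚ A.carrier K.carrier A.one) ∘ₗ K.coact

theorem twistedAction_comp_unitCoact :
    τ.twistedAction K.carrier ∘ₗ unitCoact K A = τ.twistedCoact K := by
  have : τ.twistedAction K.carrier ∘ₗ map LinearMap.id (TensorProduct.mk ℚ _ _ A.one) =
      map τ.toFun LinearMap.id :=
    TensorProduct.ext' fun c k => extAction_tmul_one_tmul A (τ.toFun c) k
  rw [unitCoact, ← LinearMap.comp_assoc, this, twistedCoact]

theorem extDiff_comp_mk_one_add :
    τ.extDiff K ∘ₗ TensorProduct.mk ℚ A.carrier K.carrier A.one + τ.twistedCoact K =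
      TensorProduct.mk ℚ A.carrier K.carrier A.one ∘ₗ K.d :=
  LinearMap.ext fun k => by
    simp [extDiff_tmul, A.d_one, A.parityOf_one, extAction_one_tmul]

theorem coextCoact_comp_unitCoact :
    coextCoact C (A.carrier ⊗[ℚ] K.carrier) ∘ₗ unitCoact K A =
      map LinearMap.id (unitCoact K A) ∘ₗ K.coact :=
  K.coextCoact_comp_map_comp_coact (by simp) _

theorem coextExtDiff_comp_unitCoact :
    τ.coextExtDiff K ∘ₗ unitCoact K A = unitCoact K A ∘ₗ K.d := by
  rw [coextExtDiff, coextDiffFrom, LinearMap.add_comp, LinearMap.add_comp, LinearMap.comp_assoc,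
    coextCoact_comp_unitCoact, unitCoact, ← LinearMap.comp_assoc, ← LinearMap.comp_assoc,
    ← LinearMap.comp_assoc, ← map_comp, ← map_comp, ← map_comp, ← unitCoact,
    twistedAction_comp_unitCoact, add_assoc, ← LinearMap.add_comp, LinearMap.id_comp,
    LinearMap.comp_id, LinearMap.comp_id, ← map_add_right, extDiff_comp_mk_one_add,
    unitCoact, LinearMap.comp_assoc, K.coact_chain, LinearMap.add_comp, LinearMap.comp_add,
    ← LinearMap.comp_assoc, ← LinearMap.comp_assoc, ← map_comp, ← map_comp]
  simp only [LinearMap.comp_id, LinearMap.id_comp]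

theorem extDiff_comp_self : τ.extDiff K ∘ₗ τ.extDiff K = 0 := by
  have twistedCoact_chain : τ.extDiff K ∘ₗ τ.twistedCoact K = -(τ.twistedCoact K ∘ₗ K.d) := by
    rw [← twistedAction_comp_unitCoact, ← LinearMap.comp_assoc,
      eq_neg_of_add_eq_zero_left (τ.extDiff_comp_twistedAction K), LinearMap.neg_comp,
      LinearMap.comp_assoc, coextExtDiff_comp_unitCoact, LinearMap.comp_assoc]
  have sq_unit : (τ.extDiff K ∘ₗ τ.extDiff K) ∘ₗ TensorProduct.mk ℚ _ _ A.one = 0 := by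
    rw [LinearMap.comp_assoc, eq_sub_of_add_eq (τ.extDiff_comp_mk_one_add K), LinearMap.comp_sub,
      ← LinearMap.comp_assoc, eq_sub_of_add_eq (τ.extDiff_comp_mk_one_add K), twistedCoact_chain,
      LinearMap.sub_comp, LinearMap.comp_assoc, K.d_sq, LinearMap.comp_zero, zero_sub, sub_self]
  have sq_extAction : (τ.extDiff K ∘ₗ τ.extDiff K) ∘ₗ extAction A K.carrier =
      extAction A K.carrier ∘ₗ map LinearMap.id (τ.extDiff K ∘ₗ τ.extDiff K) := by
    rw [LinearMap.comp_assoc, extDiff_comp_extAction, ← LinearMap.comp_assoc,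
      extDiff_comp_extAction, LinearMap.comp_assoc, DGVect.tensorDiff_comp_self]
  refine TensorProduct.ext' fun a k => ?_
  have sq_one_tmul : (τ.extDiff K ∘ₗ τ.extDiff K) (A.one ⊗ₜ k) = 0 :=
    LinearMap.congr_fun sq_unit k
  calc (τ.extDiff K ∘ₗ τ.extDiff K) (a ⊗ₜ k)
      = ((τ.extDiff K ∘ₗ τ.extDiff K) ∘ₗ extAction A K.carrier) (a ⊗ₜ (A.one ⊗ₜ k)) := by
        rw [LinearMap.comp_apply _ (extAction A K.carrier), extAction_tmul_one_tmul]
    _ = 0 := by rw [sq_extAction, LinearMap.comp_apply, map_tmul, sq_one_tmul, tmul_zero, map_zero]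

theorem exact_coextExtDiff (hτ₀ : ∀ c ∈ C.grading 0, τ.toFun c = 0)
    (hK : Function.Exact (τ.extDiff K) (τ.extDiff K)) :
    Function.Exact (τ.coextExtDiff K) (τ.coextExtDiff K) :=
  C.exact_coextDiffFrom hK (τ.extDiff_comp_twistedAction K) fun c hc x => by
    rw [twistedAction_tmul, hτ₀ c hc, zero_tmul, map_zero]

theorem exact_extDiff (hτ₀ : ∀ c ∈ C.grading 0, τ.toFun c = 0)
    (hτ₁ : ∀ c ∈ C.grading 1, τ.toFun c = 0) (hb : K.BoundedBelow)
    (hK : Function.Exact K.d K.d) : Function.Exact (τ.extDiff K) (τ.extDiff K) := by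
  obtain ⟨b, hb⟩ := hb
  obtain ⟨h, hdeg, hh⟩ := exists_graded_contraction K.grading K.d_mem hK
  let S (i : ℤ) := Submodule.map₂ (TensorProduct.mk ℚ A.carrier K.carrier) ⊤ (K.grading i)
  have tmul_mem (a : A.carrier) {i : ℤ} {k : K.carrier} (hk : k ∈ K.grading i) : a ⊗ₜ k ∈ S i :=
    Submodule.apply_mem_map₂ _ Submodule.mem_top hk
  have hD := τ.extDiff_comp_self K
  rw [extDiff_eq, sub_eq_add_neg] at hD ⊢
  refine exact_add_of_lowers hD (A.tensorDiff_contraction hh) S (iSup_map₂_mk_top_left K.grading)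
    (b := b) (fun i hi => ?_) 1 (fun i => ?_) fun i => ?_
  · simp [S, hb i hi]
  · exact Submodule.map₂_le.2 fun a _ k hk => by simpa using tmul_mem _ (hdeg i k hk)
  · refine Submodule.map₂_le.2 fun a _ k hk => ?_
    have lowers : tensorGrading C.grading K.grading i ≤ (⨆ j < i - 1, S j).comap
        (extAction A K.carrier ∘ₗ TensorProduct.mk ℚ _ _ (parityOf A.grading a) ∘ₗ
          map τ.toFun LinearMap.id) := by
      refine tensorGrading_le fun p q hpq c hc k hk => ?_
      change A.mul (parityOf A.grading a) (τ.toFun c) ⊗ₜ[ℚ] k ∈ ⨆ j < i - 1, S j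
      rcases lt_or_ge p 2 with hp | hp
      · rw [τ.toFun_eq_zero_of_lt_two hτ₀ hτ₁ hp hc, map_zero, zero_tmul]
        exact zero_mem _
      · exact Submodule.mem_iSup_of_mem q (Submodule.mem_iSup_of_mem (by omega) (tmul_mem _ hk))
    rw [Submodule.mem_comap, LinearMap.neg_apply]
    exact neg_mem (lowers (K.coact_mem i k hk))

end TwistingChain

end Extension

section Retraction

open TensorProduct

theorem isInternal_zero_top :
    DirectSum.IsInternal fun n : ℤ => if n = 0 then (⊤ : Submodule ℚ ℚ) else ⊥ := by
  rw [DirectSum.isInternal_submodule_iff_iSupIndep_and_iSup_eq_top]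
  refine ⟨fun n => ?_, top_unique (le_iSup_of_le 0 (by simp))⟩
  rcases eq_or_ne n 0 with rfl | hn
  · have : ⨆ j, ⨆ (_ : j ≠ (0 : ℤ)), (if j = 0 then (⊤ : Submodule ℚ ℚ) else ⊥) = ⊥ := by
      simp +contextual
    rw [this]
    exact disjoint_bot_right
  · simp [hn]

/-- The ground field `ℚ`, as a dg algebra concentrated in degree zero. -/
def DGAlgebra.ground : DGAlgebra where
  carrier := ℚ
  grading n := if n = 0 then ⊤ else ⊥
  isDecomp := isInternal_zero_top.chooseDecomposition
  d := 0
  d_mem _ _ _ := zero_mem _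
  d_sq := LinearMap.comp_zero 0
  mul := LinearMap.mul ℚ ℚ
  one := 1
  one_mem := by simp
  mul_mem i j x y hx hy := by
    by_cases hi : i = 0 <;> by_cases hj : j = 0 <;> simp_all
  mul_assoc' := mul_assoc
  one_mul' := one_mul
  mul_one' := mul_one
  leibniz i x y _ := by simp

namespace DGAlgebraHom

variable {A : DGAlgebra} (ε : DGAlgebraHom A DGAlgebra.ground)

/-- An augmentation `A → ℚ`, as a linear functional. -/
def functional : A.carrier →ₗ[ℚ] ℚ := ε.toLinearMap

theorem functional_one : ε.functional A.one = 1 := ε.map_one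

theorem functional_mul (a b : A.carrier) :
    ε.functional (A.mul a b) = ε.functional a * ε.functional b := ε.map_mul a b

theorem functional_d (a : A.carrier) : ε.functional (A.d a) = 0 := LinearMap.congr_fun ε.chain a

theorem functional_comp_parityOf : ε.functional ∘ₗ parityOf A.grading = ε.functional :=
  ext_homogeneous A.grading fun n a ha => by
    have ha' : ε.functional a ∈ if n = 0 then (⊤ : Submodule ℚ ℚ) else ⊥ := ε.mem n a ha
    by_cases hn : n = 0
    · simp [parityOf_of_mem A.grading ha, hn]
    · rw [if_neg hn, Submodule.mem_bot] at ha'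
      simp [parityOf_of_mem A.grading ha, ha']

theorem functional_parityOf (a : A.carrier) :
    ε.functional (parityOf A.grading a) = ε.functional a :=
  LinearMap.congr_fun ε.functional_comp_parityOf a

/-- The map `a ⊗ k ↦ ε(a) k`. -/
def tensorProj (K : Type) [AddCommGroup K] [Module ℚ K] : A.carrier ⊗[ℚ] K →ₗ[ℚ] K :=
  (TensorProduct.lid ℚ K).toLinearMap ∘ₗ map ε.functional LinearMap.id

theorem tensorProj_tmul {K : Type} [AddCommGroup K] [Module ℚ K] (a : A.carrier) (k : K) :
    ε.tensorProj K (a ⊗ₜ k) = ε.functional a • k := rfl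

theorem tensorProj_extAction {K : Type} [AddCommGroup K] [Module ℚ K] (a : A.carrier)
    (x : A.carrier ⊗[ℚ] K) :
    ε.tensorProj K (extAction A K (a ⊗ₜ x)) = ε.functional a • ε.tensorProj K x := by
  induction x with
  | zero => simp
  | tmul b k =>
    rw [extAction_tmul, tensorProj_tmul, tensorProj_tmul, functional_mul, mul_smul]
  | add x y hx hy => rw [tmul_add, map_add, map_add, map_add, smul_add, hx, hy]

end DGAlgebraHom

namespace TwistingChain

variable {C : DGCoalgebra} {A : DGAlgebra} (τ : TwistingChain C A)
  {ε : DGAlgebraHom A DGAlgebra.ground} (K : DGComodule C)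

theorem tensorProj_comp_twistedAction (hε : ∀ c, ε.functional (τ.toFun c) = 0) (K : Type)
    [AddCommGroup K] [Module ℚ K] : ε.tensorProj K ∘ₗ τ.twistedAction K = 0 :=
  TensorProduct.ext' fun c x => by
    rw [LinearMap.comp_apply, twistedAction_tmul, ε.tensorProj_extAction, hε, zero_smul,
      LinearMap.zero_apply]

theorem tensorProj_twistedCoact (hε : ∀ c, ε.functional (τ.toFun c) = 0) (k : K.carrier) :
    ε.tensorProj K.carrier (τ.twistedCoact K k) = 0 := by
  rw [← twistedAction_comp_unitCoact]
  exact LinearMap.congr_fun (τ.tensorProj_comp_twistedAction hε K.carrier) _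

theorem tensorProj_comp_extDiff (hε : ∀ c, ε.functional (τ.toFun c) = 0) :
    ε.tensorProj K.carrier ∘ₗ τ.extDiff K = K.d ∘ₗ ε.tensorProj K.carrier :=
  TensorProduct.ext' fun a k => by
    simp [extDiff_tmul, ε.tensorProj_tmul, ε.tensorProj_extAction, ε.functional_d,
      ε.functional_parityOf, τ.tensorProj_twistedCoact K hε]

theorem exact_of_exact_extDiff (hτ₀ : ∀ c ∈ C.grading 0, τ.toFun c = 0)
    (hε : ∀ c, ε.functional (τ.toFun c) = 0)
    (hK : Function.Exact (τ.extDiff K) (τ.extDiff K)) : Function.Exact K.d K.d := by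
  have retract_unitCoact : (ε.tensorProj K.carrier ∘ₗ C.counitProj (A.carrier ⊗[ℚ] K.carrier)) ∘ₗ
      unitCoact K A = LinearMap.id := by
    have proj_one : ε.tensorProj K.carrier ∘ₗ TensorProduct.mk ℚ A.carrier K.carrier A.one =
        LinearMap.id :=
      LinearMap.ext fun k => by simp [ε.tensorProj_tmul, ε.functional_one]
    rw [unitCoact, LinearMap.comp_assoc,
      K.counitProj_comp_map_comp_coact (LinearMap.comp_id _), proj_one]
  refine exact_of_retract (τ.coextExtDiff_comp_unitCoact K) ?_ retract_unitCoact
    (τ.exact_coextExtDiff K hτ₀ hK)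
  rw [LinearMap.comp_assoc, C.counitProj_comp_coextDiffFrom, LinearMap.comp_add,
    τ.tensorProj_comp_twistedAction hε, add_zero, ← LinearMap.comp_assoc,
    ← τ.tensorProj_comp_extDiff K hε, LinearMap.comp_assoc]

end TwistingChain

theorem CobarData.exists_augmentation {C : CoaugDGCoalgebra} (Ω : CobarData C) :
    ∃ ε : DGAlgebraHom Ω.alg DGAlgebra.ground, ∀ c, ε.functional (Ω.t.toFun c) = 0 := by
  let zero : TwistingChain C.toDGCoalgebra DGAlgebra.ground :=
    { toFun := 0
      mem := fun n _ _ => zero_mem _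
      twist := by simp }
  obtain ⟨ε, hε, -⟩ := Ω.univ DGAlgebra.ground zero rfl
  exact ⟨ε, LinearMap.congr_fun hε⟩

end Retraction

section ConeGrading

theorem isInternal_prod {ι R V W : Type*} [DecidableEq ι] [Ring R] [AddCommGroup V] [Module R V]
    [AddCommGroup W] [Module R W] {g : ι → Submodule R V} {g' : ι → Submodule R W}
    (hg : DirectSum.IsInternal g) (hg' : DirectSum.IsInternal g') :
    DirectSum.IsInternal fun i => (g i).prod (g' i) := by
  rw [DirectSum.isInternal_submodule_iff_iSupIndep_and_iSup_eq_top] at hg hg' ⊢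
  refine ⟨fun i => ?_, top_unique ?_⟩
  · have sup_le : ⨆ j, ⨆ (_ : j ≠ i), (g j).prod (g' j) ≤
        (⨆ j, ⨆ (_ : j ≠ i), g j).prod (⨆ j, ⨆ (_ : j ≠ i), g' j) :=
      iSup₂_le fun j hj => Submodule.prod_mono (le_iSup₂_of_le j hj le_rfl)
        (le_iSup₂_of_le j hj le_rfl)
    refine Disjoint.mono_right sup_le ?_
    rw [disjoint_iff, Submodule.prod_inf_prod, (hg.1 i).eq_bot, (hg'.1 i).eq_bot,
      Submodule.prod_bot]
  · rw [← LinearMap.sup_range_inl_inr, ← Submodule.map_top, ← Submodule.map_top, ← hg.2, ← hg'.2,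
      Submodule.map_iSup, Submodule.map_iSup]
    refine sup_le (iSup_mono fun i => ?_) (iSup_mono fun i => ?_)
    · rintro _ ⟨v, hv, rfl⟩
      exact ⟨hv, zero_mem _⟩
    · rintro _ ⟨w, hw, rfl⟩
      exact ⟨zero_mem _, hw⟩

theorem isInternal_comp_equiv {ι κ R V : Type*} [DecidableEq ι] [DecidableEq κ] [Ring R]
    [AddCommGroup V] [Module R V] {g : ι → Submodule R V} (hg : DirectSum.IsInternal g)
    (e : κ ≃ ι) : DirectSum.IsInternal fun i => g (e i) := by
  rw [DirectSum.isInternal_submodule_iff_iSupIndep_and_iSup_eq_top] at hg ⊢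
  exact ⟨hg.1.comp e.injective, e.iSup_comp.trans hg.2⟩

variable {V W : Type} [AddCommGroup V] [Module ℚ V] [AddCommGroup W] [Module ℚ W]

/-- The grading of `V[1] × W`. -/
def coneGrading (g : ℤ → Submodule ℚ V) (g' : ℤ → Submodule ℚ W) (n : ℤ) :
    Submodule ℚ (V × W) :=
  (g (n - 1)).prod (g' n)

instance (g : ℤ → Submodule ℚ V) (g' : ℤ → Submodule ℚ W) [DirectSum.Decomposition g]
    [DirectSum.Decomposition g'] : DirectSum.Decomposition (coneGrading g g') :=
  (isInternal_prod (isInternal_comp_equiv (DirectSum.Decomposition.isInternal g)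
    (Equiv.subRight (1 : ℤ))) (DirectSum.Decomposition.isInternal g')).chooseDecomposition

end ConeGrading

section MappingCone

open TensorProduct

namespace DGVect

variable (X : DGVect) (V W : Type) [AddCommGroup V] [Module ℚ V] [AddCommGroup W] [Module ℚ W]

/-- The isomorphism `(X ⊗ V)[1] × (X ⊗ W) ≃ X ⊗ (V[1] × W)`; moving the shift past `x` yields the
sign `(-1)^|x|` on the first factor. -/
def tensorConeEquiv :
    ((X.carrier ⊗[ℚ] V) × (X.carrier ⊗[ℚ] W)) ≃ₗ[ℚ] X.carrier ⊗[ℚ] (V × W) :=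
  ((LinearEquiv.rTensor V (.ofInvolutive (parityOf X.grading)
    (parityOf_parityOf X.grading))).prodCongr (.refl ℚ _)).trans
      (TensorProduct.prodRight ℚ ℚ X.carrier V W).symm

theorem tensorConeEquiv_comp_inl : (X.tensorConeEquiv V W).toLinearMap ∘ₗ LinearMap.inl ℚ _ _ =
    map (parityOf X.grading) (LinearMap.inl ℚ V W) :=
  TensorProduct.ext' fun x v => (TensorProduct.prodRight ℚ ℚ X.carrier V W).injective <| by
    simp [tensorConeEquiv, LinearEquiv.ofInvolutive]

theorem tensorConeEquiv_comp_inr : (X.tensorConeEquiv V W).toLinearMap ∘ₗ LinearMap.inr ℚ _ _ =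
    map LinearMap.id (LinearMap.inr ℚ V W) :=
  TensorProduct.ext' fun x w => (TensorProduct.prodRight ℚ ℚ X.carrier V W).injective <| by
    simp [tensorConeEquiv]

variable {V W}

theorem map_id_comp_tensorDiff {dV : V →ₗ[ℚ] V} {dW : W →ₗ[ℚ] W} {f : V →ₗ[ℚ] W}
    (hf : f ∘ₗ dV = dW ∘ₗ f) :
    map LinearMap.id f ∘ₗ X.tensorDiff dV = X.tensorDiff dW ∘ₗ map LinearMap.id f := by
  rw [tensorDiff, tensorDiff, LinearMap.comp_add, LinearMap.add_comp]
  simp only [← map_comp, hf, LinearMap.comp_id, LinearMap.id_comp]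

theorem tensorDiff_comp_map_parityOf {dV : V →ₗ[ℚ] V} {dW : W →ₗ[ℚ] W} {j g : V →ₗ[ℚ] W}
    (hj : dW ∘ₗ j = -(j ∘ₗ dV) + g) :
    X.tensorDiff dW ∘ₗ map (parityOf X.grading) j =
      -(map (parityOf X.grading) j ∘ₗ X.tensorDiff dV) + map LinearMap.id g := by
  refine TensorProduct.ext' fun x v => ?_
  have d_parity : X.d (parityOf X.grading x) = -parityOf X.grading (X.d x) :=
    (neg_eq_iff_eq_neg.2 (X.parityOf_d x)).symm
  have d_j : dW (j v) = -j (dV v) + g v := LinearMap.congr_fun hj v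
  simp only [LinearMap.comp_apply, LinearMap.add_apply, LinearMap.neg_apply, map_tmul,
    tensorDiff_tmul, d_parity, parityOf_parityOf, d_j, map_add, neg_tmul, tmul_add, tmul_neg,
    LinearMap.id_apply]
  abel

theorem tensorDiff_coneDiff_comp_tensorConeEquiv (dV : V →ₗ[ℚ] V) (dW : W →ₗ[ℚ] W)
    (f : V →ₗ[ℚ] W) :
    X.tensorDiff (coneDiff dV dW f) ∘ₗ (X.tensorConeEquiv V W).toLinearMap =
      (X.tensorConeEquiv V W).toLinearMap ∘ₗ
        coneDiff (X.tensorDiff dV) (X.tensorDiff dW) (map LinearMap.id f) := by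
  refine LinearMap.prod_ext ?_ ?_
  · rw [LinearMap.comp_assoc, LinearMap.comp_assoc, tensorConeEquiv_comp_inl, coneDiff_comp_inl,
      X.tensorDiff_comp_map_parityOf (coneDiff_comp_inl dV dW f), LinearMap.comp_add,
      LinearMap.comp_neg, ← LinearMap.comp_assoc, ← LinearMap.comp_assoc,
      tensorConeEquiv_comp_inl, tensorConeEquiv_comp_inr, ← map_comp, LinearMap.id_comp]
  · rw [LinearMap.comp_assoc, LinearMap.comp_assoc, tensorConeEquiv_comp_inr, coneDiff_comp_inr,
      ← LinearMap.comp_assoc, tensorConeEquiv_comp_inr,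
      X.map_id_comp_tensorDiff (coneDiff_comp_inr dV dW f).symm]

end DGVect

namespace DGComodule

variable {C : DGCoalgebra} {N M : DGComodule C}

section Coaction

variable (N M)

/-- The coaction on the mapping cone `N[1] × M`. -/
def coneCoact : N.carrier × M.carrier →ₗ[ℚ] C.carrier ⊗[ℚ] (N.carrier × M.carrier) :=
  (C.tensorConeEquiv N.carrier M.carrier).toLinearMap ∘ₗ N.coact.prodMap M.coact

theorem coneCoact_comp_inl : coneCoact N M ∘ₗ LinearMap.inl ℚ N.carrier M.carrier =
    map (parityOf C.grading) (LinearMap.inl ℚ N.carrier M.carrier) ∘ₗ N.coact := by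
  rw [← DGVect.tensorConeEquiv_comp_inl, coneCoact, LinearMap.comp_assoc, LinearMap.comp_assoc]
  exact congrArg _ (LinearMap.ext fun v => Prod.ext rfl M.coact.map_zero)

theorem coneCoact_comp_inr : coneCoact N M ∘ₗ LinearMap.inr ℚ N.carrier M.carrier =
    map LinearMap.id (LinearMap.inr ℚ N.carrier M.carrier) ∘ₗ M.coact := by
  rw [← DGVect.tensorConeEquiv_comp_inr, coneCoact, LinearMap.comp_assoc, LinearMap.comp_assoc]
  exact congrArg _ (LinearMap.ext fun w => Prod.ext N.coact.map_zero rfl)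

theorem coneCoact_mem (n : ℤ) (x : N.carrier × M.carrier)
    (hx : x ∈ coneGrading N.grading M.grading n) :
    coneCoact N M x ∈ tensorGrading C.grading (coneGrading N.grading M.grading) n := by
  have inl_mem (k : ℤ) (v : N.carrier) (hv : v ∈ N.grading k) :
      LinearMap.inl ℚ N.carrier M.carrier v ∈ coneGrading N.grading M.grading (k + 1) :=
    ⟨by simpa using hv, zero_mem _⟩
  have inr_mem (k : ℤ) (w : M.carrier) (hw : w ∈ M.grading k) :
      LinearMap.inr ℚ N.carrier M.carrier w ∈ coneGrading N.grading M.grading (k + 0) :=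
    ⟨zero_mem _, by simpa using hw⟩
  have left := map_mem_tensorGrading (fun _ _ hc => parityOf_mem C.grading hc) inl_mem
    (N.coact_mem _ _ hx.1)
  have right := map_mem_tensorGrading (u := LinearMap.id) (fun _ _ hc => hc) inr_mem
    (M.coact_mem _ _ hx.2)
  rw [sub_add_cancel, ← LinearMap.comp_apply, ← coneCoact_comp_inl] at left
  rw [add_zero, ← LinearMap.comp_apply, ← coneCoact_comp_inr] at right
  simpa [← map_add] using add_mem left right

theorem coextCoact_comp_coneCoact :
    coextCoact C (N.carrier × M.carrier) ∘ₗ coneCoact N M =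
      map LinearMap.id (coneCoact N M) ∘ₗ coneCoact N M := by
  refine LinearMap.prod_ext ?_ ?_
  · rw [LinearMap.comp_assoc, coneCoact_comp_inl,
      N.coextCoact_comp_map_comp_coact C.comul_comp_parityOf, LinearMap.comp_assoc,
      coneCoact_comp_inl, ← LinearMap.comp_assoc, ← map_comp, coneCoact_comp_inl,
      LinearMap.id_comp]
  · rw [LinearMap.comp_assoc, coneCoact_comp_inr, M.coextCoact_comp_map_comp_coact (by simp),
      LinearMap.comp_assoc, coneCoact_comp_inr, ← LinearMap.comp_assoc, ← map_comp,
      coneCoact_comp_inr, LinearMap.id_comp]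

theorem counitProj_comp_coneCoact :
    C.counitProj (N.carrier × M.carrier) ∘ₗ coneCoact N M = LinearMap.id := by
  refine LinearMap.prod_ext ?_ ?_
  · rw [LinearMap.comp_assoc, coneCoact_comp_inl,
      N.counitProj_comp_map_comp_coact C.counit_comp_parityOf, LinearMap.id_comp]
  · rw [LinearMap.comp_assoc, coneCoact_comp_inr,
      M.counitProj_comp_map_comp_coact (LinearMap.comp_id _), LinearMap.id_comp]

end Coaction

theorem coneCoact_comp_coneDiff {f : N.carrier →ₗ[ℚ] M.carrier} (hf : IsComoduleHom C N M f) :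
    coneCoact N M ∘ₗ coneDiff N.d M.d f =
      C.tensorDiff (coneDiff N.d M.d f) ∘ₗ coneCoact N M := by
  have coact_chain : N.coact.prodMap M.coact ∘ₗ coneDiff N.d M.d f =
      coneDiff (C.tensorDiff N.d) (C.tensorDiff M.d) (map LinearMap.id f) ∘ₗ
        N.coact.prodMap M.coact :=
    prodMap_comp_coneDiff N.coact_chain M.coact_chain hf.2.2
  rw [coneCoact, LinearMap.comp_assoc, coact_chain, ← LinearMap.comp_assoc, ← LinearMap.comp_assoc,
    C.tensorDiff_coneDiff_comp_tensorConeEquiv]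

/-- The mapping cone of a comodule morphism. -/
abbrev cone {f : N.carrier →ₗ[ℚ] M.carrier} (hf : IsComoduleHom C N M f) : DGComodule C where
  carrier := N.carrier × M.carrier
  grading := coneGrading N.grading M.grading
  d := coneDiff N.d M.d f
  d_mem n x hx := by
    have hfx := hf.1 _ _ hx.1
    exact ⟨neg_mem (N.d_mem _ _ hx.1), add_mem hfx (M.d_mem _ _ hx.2)⟩
  d_sq := coneDiff_comp_self N.d_sq M.d_sq hf.2.1
  coact := coneCoact N M
  coact_mem := coneCoact_mem N M
  coassoc := coextCoact_comp_coneCoact N M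
  counit_coact := counitProj_comp_coneCoact N M
  coact_chain := coneCoact_comp_coneDiff hf

theorem cone_boundedBelow {f : N.carrier →ₗ[ℚ] M.carrier} (hf : IsComoduleHom C N M f)
    (hN : N.BoundedBelow) (hM : M.BoundedBelow) : (cone hf).BoundedBelow := by
  obtain ⟨b, hb⟩ := hN
  obtain ⟨b', hb'⟩ := hM
  refine ⟨min b b', fun n hn => ?_⟩
  change (N.grading (n - 1)).prod (M.grading n) = ⊥
  rw [hb _ (by omega), hb' _ (by omega), Submodule.prod_bot]

end DGComodule

theorem map_comp_extAction {A : DGAlgebra} {u : A.carrier →ₗ[ℚ] A.carrier}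
    (hu : ∀ a b, u (A.mul a b) = A.mul (u a) (u b)) {K L : Type} [AddCommGroup K] [Module ℚ K]
    [AddCommGroup L] [Module ℚ L] (f : K →ₗ[ℚ] L) :
    map u f ∘ₗ extAction A K = extAction A L ∘ₗ map u (map u f) :=
  TensorProduct.ext <| LinearMap.ext fun a => TensorProduct.ext' fun b k =>
    congrArg (· ⊗ₜ[ℚ] f k) (hu a b)

namespace TwistingChain

variable {C : DGCoalgebra} {A : DGAlgebra} (τ : TwistingChain C A)

theorem map_id_comp_extDiff {K L : DGComodule C} {f : K.carrier →ₗ[ℚ] L.carrier}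
    (hf : f ∘ₗ K.d = L.d ∘ₗ f) (hρ : map LinearMap.id f ∘ₗ K.coact = L.coact ∘ₗ f) :
    map LinearMap.id f ∘ₗ τ.extDiff K = τ.extDiff L ∘ₗ map LinearMap.id f := by
  have twistedCoact_natural : map LinearMap.id f ∘ₗ τ.twistedCoact K = τ.twistedCoact L ∘ₗ f := by
    rw [twistedCoact, twistedCoact, LinearMap.comp_assoc, ← hρ, ← LinearMap.comp_assoc,
      ← LinearMap.comp_assoc, ← map_comp, ← map_comp, LinearMap.id_comp, LinearMap.comp_id,
      LinearMap.id_comp, LinearMap.comp_id]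
  have extAction_natural := map_comp_extAction (A := A) (u := LinearMap.id) (fun _ _ => rfl) f
  rw [extDiff_eq, extDiff_eq, LinearMap.comp_sub, LinearMap.sub_comp, A.map_id_comp_tensorDiff hf,
    ← LinearMap.comp_assoc, extAction_natural, LinearMap.comp_assoc, LinearMap.comp_assoc,
    ← map_comp, ← map_comp, twistedCoact_natural, LinearMap.id_comp, LinearMap.comp_id]

theorem extDiff_comp_map_parityOf {K L : DGComodule C} {j g : K.carrier →ₗ[ℚ] L.carrier}
    (hj : L.d ∘ₗ j = -(j ∘ₗ K.d) + g)
    (hρ : L.coact ∘ₗ j = map (parityOf C.grading) j ∘ₗ K.coact) :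
    τ.extDiff L ∘ₗ map (parityOf A.grading) j =
      -(map (parityOf A.grading) j ∘ₗ τ.extDiff K) + map LinearMap.id g := by
  have sign : map (τ.toFun ∘ₗ parityOf C.grading) j = -map (parityOf A.grading ∘ₗ τ.toFun) j :=
    TensorProduct.ext' fun c k => by simp [parityOf_comp_toFun, neg_tmul]
  have twistedCoact_anti : τ.twistedCoact L ∘ₗ j =
      -(map (parityOf A.grading) j ∘ₗ τ.twistedCoact K) := by
    rw [twistedCoact, twistedCoact, LinearMap.comp_assoc, hρ, ← LinearMap.comp_assoc,
      ← LinearMap.comp_assoc, ← map_comp, ← map_comp, LinearMap.id_comp, LinearMap.comp_id, sign,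
      LinearMap.neg_comp]
  have twist_anti : (extAction A L.carrier ∘ₗ map (parityOf A.grading) (τ.twistedCoact L)) ∘ₗ
      map (parityOf A.grading) j = -(map (parityOf A.grading) j ∘ₗ
        extAction A K.carrier ∘ₗ map (parityOf A.grading) (τ.twistedCoact K)) := by
    rw [← LinearMap.comp_assoc _ (extAction _ _), map_comp_extAction A.parityOf_mul,
      LinearMap.comp_assoc, LinearMap.comp_assoc, ← map_comp, ← map_comp, twistedCoact_anti]
    exact TensorProduct.ext' fun a k => by simp [tmul_neg]
  rw [extDiff_eq, extDiff_eq, LinearMap.sub_comp, LinearMap.comp_sub, twist_anti,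
    A.tensorDiff_comp_map_parityOf hj]
  abel

variable {N M : DGComodule C} {f : N.carrier →ₗ[ℚ] M.carrier}

theorem extDiff_cone_comp_tensorConeEquiv (hf : IsComoduleHom C N M f) :
    τ.extDiff (DGComodule.cone hf) ∘ₗ (A.tensorConeEquiv N.carrier M.carrier).toLinearMap =
      (A.tensorConeEquiv N.carrier M.carrier).toLinearMap ∘ₗ
        coneDiff (τ.extDiff N) (τ.extDiff M) (map LinearMap.id f) := by
  refine LinearMap.prod_ext ?_ ?_
  · rw [LinearMap.comp_assoc, LinearMap.comp_assoc, DGVect.tensorConeEquiv_comp_inl,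
      coneDiff_comp_inl, τ.extDiff_comp_map_parityOf (L := DGComodule.cone hf)
        (coneDiff_comp_inl N.d M.d f) (DGComodule.coneCoact_comp_inl N M), LinearMap.comp_add,
      LinearMap.comp_neg, ← LinearMap.comp_assoc, ← LinearMap.comp_assoc,
      DGVect.tensorConeEquiv_comp_inl, DGVect.tensorConeEquiv_comp_inr, ← map_comp,
      LinearMap.id_comp]
  · rw [LinearMap.comp_assoc, LinearMap.comp_assoc, DGVect.tensorConeEquiv_comp_inr,
      coneDiff_comp_inr, ← LinearMap.comp_assoc, DGVect.tensorConeEquiv_comp_inr,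
      τ.map_id_comp_extDiff (L := DGComodule.cone hf) (coneDiff_comp_inr N.d M.d f).symm
        (DGComodule.coneCoact_comp_inr N M).symm]

theorem isQuasiIso_extDiff_iff (hf : IsComoduleHom C N M f) :
    IsQuasiIso (τ.extDiff N) (τ.extDiff M) (map LinearMap.id f) ↔
      Function.Exact (τ.extDiff (DGComodule.cone hf)) (τ.extDiff (DGComodule.cone hf)) := by
  have intertwine := τ.extDiff_cone_comp_tensorConeEquiv hf
  rw [isQuasiIso_iff_exact_coneDiff (τ.extDiff_comp_self N) (τ.extDiff_comp_self M)
    (τ.map_id_comp_extDiff hf.2.1 hf.2.2),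
    Function.Exact.iff_of_ladder_linearEquiv intertwine intertwine]

end TwistingChain

theorem tEquiv_iff_quasiIso_of_boundedBelow_general {C : DGCoalgebra} {A : DGAlgebra}
    (τ : TwistingChain C A) (hτ₀ : ∀ c ∈ C.grading 0, τ.toFun c = 0)
    (ε : DGAlgebraHom A DGAlgebra.ground) (hε : ∀ c, ε.functional (τ.toFun c) = 0)
    {N M : DGComodule C} {f : N.carrier →ₗ[ℚ] M.carrier} (hf : IsComoduleHom C N M f) :
    (IsQuasiIso (τ.extDiff N) (τ.extDiff M) (map LinearMap.id f) → IsQuasiIso N.d M.d f) ∧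
    ((∀ c ∈ C.grading 1, τ.toFun c = 0) → N.BoundedBelow → M.BoundedBelow →
      IsQuasiIso N.d M.d f →
        IsQuasiIso (τ.extDiff N) (τ.extDiff M) (map LinearMap.id f)) := by
  rw [τ.isQuasiIso_extDiff_iff hf, isQuasiIso_iff_exact_coneDiff N.d_sq M.d_sq hf.2.1]
  exact ⟨τ.exact_of_exact_extDiff (DGComodule.cone hf) hτ₀ hε, fun hτ₁ hN hM =>
    τ.exact_extDiff (DGComodule.cone hf) hτ₀ hτ₁ (DGComodule.cone_boundedBelow hf hN hM)⟩

end MappingCone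

/-! ## Statement 6: `t`-equivalences versus quasi-isomorphisms -/

/-- For a 2-reduced cocommutative dg coalgebra `C`, every
`t`-equivalence of left dg `C`-comodules is a quasi-isomorphism; conversely, every
quasi-isomorphism between bounded below `C`-comodules is a `t`-equivalence. -/
theorem tEquiv_iff_quasiIso_of_boundedBelow (C : CoaugDGCoalgebra) (hred : C.TwoReduced)
    (hcc : C.toDGCoalgebra.Cocomm) (Ω : CobarData C)
    (N M : DGComodule C.toDGCoalgebra) (f : N.carrier →ₗ[ℚ] M.carrier)
    (hf : IsComoduleHom C.toDGCoalgebra N M f) :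
    (IsTEquiv C Ω N M f → IsQuasiIso N.d M.d f) ∧
    (N.toDGVect.BoundedBelow → M.toDGVect.BoundedBelow →
      IsQuasiIso N.d M.d f → IsTEquiv C Ω N M f) := by
  have t_degree_zero : ∀ c ∈ C.grading 0, Ω.t.toFun c = 0 := fun c hc => by
    obtain ⟨q, rfl⟩ := Submodule.mem_span_singleton.1 (hred.1 ▸ hc)
    rw [map_smul, Ω.t_one, smul_zero]
  have t_degree_one : ∀ c ∈ C.grading 1, Ω.t.toFun c = 0 := fun c hc => by
    rw [(Submodule.mem_bot ℚ (x := c)).1 (hred.2 ▸ hc), map_zero]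
  obtain ⟨ε, hε⟩ := Ω.exists_augmentation
  have ⟨reflects, preserves⟩ :=
    tEquiv_iff_quasiIso_of_boundedBelow_general Ω.t t_degree_zero ε hε hf
  exact ⟨reflects, preserves t_degree_one⟩

end
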